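/- arXiv:2107.02231 — 2 statements merged into one kernel-verified Lean document; each statement's English description precedes it below -/
import Mathlib

section
/- Let X be a finite set of distinct points in P^m × P^n and let k, l ∈ N. If HF_X(i,k) = HF_X(i+1,k) then HF_X(i,k+1) = HF_X(i+1,k+1); and if HF_X(l,j) = HF_X(l,j+1) then HF_X(l+1,j) = HF_X(l+1,j+1). In particular, setting ν_k = min{ i ∈ N : HF_X(i,k) = HF_X(i+1,k) }, ϱ_l = min{ j ∈ N : HF_X(l,j) = HF_X(l,j+1) }, ν = sup_k ν_k and ϱ = sup_l ϱ_l, one has (ν, ϱ) = (r_{X_1}, r_{X_2}), where r_{X_k} is the regularity index of HF_{X_k} for k = 1, 2. -/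
/- Common setup: finite sets of points in the multiprojective space
   `P^m x P^n` over a field `K` of characteristic zero, their bihomogeneous
   vanishing ideals, bigraded Hilbert functions, Kähler differents,
   separators, Cayley-Bacharach property and complete intersections. -/

open MvPolynomial

set_option maxHeartbeats 1000000
set_option synthInstance.maxHeartbeats 400000

noncomputable section

namespace MultiProjPoints

variable (K : Type) [Field K] [CharZero K] [DecidableEq K]

/-- The bigraded coordinate ring `S = K[X_0,…,X_m,Y_0,…,Y_n]` of `P^m × P^n`. -/
abbrev BiRing (m n : ℕ) : Type := MvPolynomial (Fin (m+1) ⊕ Fin (n+1)) K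

/-- The weights giving the bigrading: `deg X_i = (1,0)`, `deg Y_j = (0,1)`. -/
def biwt (m n : ℕ) : (Fin (m+1) ⊕ Fin (n+1)) → ℤ × ℤ :=
  Sum.elim (fun _ => ((1 : ℤ), (0 : ℤ))) (fun _ => ((0 : ℤ), (1 : ℤ)))

variable {m n : ℕ}

/-- A (representative of a) point of `P^m × P^n`. -/
abbrev BiPt (m n : ℕ) : Type := (Fin (m+1) → K) × (Fin (n+1) → K)

/-- `F` is bihomogeneous of degree `d`. -/
def IsBihom (F : BiRing K m n) (d : ℤ × ℤ) : Prop :=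
  IsWeightedHomogeneous (biwt m n) F d

/-- Evaluation of a polynomial at (a representative of) a point. -/
def evalB (p : BiPt K m n) (F : BiRing K m n) : K :=
  eval (Sum.elim p.1 p.2) F

/-- A finset of representatives is a good configuration of points of
`P^m × P^n`: all representatives are nonzero, and proportional
representatives coincide (so distinct elements are distinct projective
points, and images under the two projections behave correctly). -/
def GoodConfig (𝕏 : Finset (BiPt K m n)) : Prop :=
  (∀ p ∈ 𝕏, p.1 ≠ 0 ∧ p.2 ≠ 0) ∧
  (∀ p ∈ 𝕏, ∀ q ∈ 𝕏, (∃ c : K, c ≠ 0 ∧ p.1 = c • q.1) → p.1 = q.1) ∧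
  (∀ p ∈ 𝕏, ∀ q ∈ 𝕏, (∃ c : K, c ≠ 0 ∧ p.2 = c • q.2) → p.2 = q.2)

/-- The bihomogeneous vanishing ideal `I_𝕏` of a set of points. -/
def vIdealB (𝕏 : Finset (BiPt K m n)) : Ideal (BiRing K m n) :=
  Ideal.span {F | (∃ d, IsBihom K F d) ∧ ∀ p ∈ 𝕏, evalB K p F = 0}

/-- The bihomogeneous vanishing ideal of a single point. -/
def ptIdealB (p : BiPt K m n) : Ideal (BiRing K m n) :=
  Ideal.span {F | (∃ d, IsBihom K F d) ∧ evalB K p F = 0}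

/-- The degree-`d` piece of `S/I`. -/
def degPieceB (I : Ideal (BiRing K m n)) (d : ℤ × ℤ) :
    Submodule K (BiRing K m n ⧸ I) :=
  (weightedHomogeneousSubmodule K (biwt m n) d).map
    (Ideal.Quotient.mkₐ K I).toLinearMap

/-- The Hilbert function of `S/I`. -/
def HFI (I : Ideal (BiRing K m n)) (d : ℤ × ℤ) : ℕ :=
  Module.finrank K (degPieceB K I d)

/-- The Hilbert function of a set of points in `P^m × P^n`. -/
def HFB (𝕏 : Finset (BiPt K m n)) (d : ℤ × ℤ) : ℕ :=
  HFI K (vIdealB K 𝕏) d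

/-- The Hilbert function of a (bihomogeneous) ideal `J` of `R_𝕏 = S/I`. -/
def HFIdealB (I : Ideal (BiRing K m n)) (J : Ideal (BiRing K m n ⧸ I))
    (d : ℤ × ℤ) : ℕ :=
  Module.finrank K ↥((Submodule.restrictScalars K J) ⊓ degPieceB K I d)

/- ### Single projective space `P^N` -/

/-- The coordinate ring `K[X_0,…,X_N]` of `P^N`. -/
abbrev PRing (N : ℕ) : Type := MvPolynomial (Fin (N+1)) K

/-- The standard grading on `K[X_0,…,X_N]` (with values in `ℤ`). -/
def wt1 (N : ℕ) : Fin (N+1) → ℤ := fun _ => 1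

/-- `F` is homogeneous of degree `d`. -/
def IsHom1 {N : ℕ} (F : PRing K N) (d : ℤ) : Prop :=
  IsWeightedHomogeneous (wt1 N) F d

/-- A good finite set of representatives of points in `P^N`. -/
def GoodSet {N : ℕ} (Y : Finset (Fin (N+1) → K)) : Prop :=
  (∀ q ∈ Y, q ≠ 0) ∧
  (∀ p ∈ Y, ∀ q ∈ Y, (∃ c : K, c ≠ 0 ∧ p = c • q) → p = q)

/-- The homogeneous vanishing ideal of a set of points in `P^N`. -/
def vIdeal1 {N : ℕ} (Y : Finset (Fin (N+1) → K)) : Ideal (PRing K N) :=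
  Ideal.span {F | (∃ d, IsHom1 K F d) ∧ ∀ q ∈ Y, eval q F = 0}

/-- The degree-`d` piece of `K[X_0,…,X_N]/I`. -/
def degPiece1 {N : ℕ} (I : Ideal (PRing K N)) (d : ℤ) :
    Submodule K (PRing K N ⧸ I) :=
  (weightedHomogeneousSubmodule K (wt1 N) d).map
    (Ideal.Quotient.mkₐ K I).toLinearMap

/-- The Hilbert function of a set of points in `P^N`. -/
def HF1 {N : ℕ} (Y : Finset (Fin (N+1) → K)) (d : ℤ) : ℕ :=
  Module.finrank K (degPiece1 K (vIdeal1 K Y) d)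

/-- The Hilbert function of a homogeneous ideal of `K[X_0,…,X_N]/I`. -/
def HFIdeal1 {N : ℕ} (I : Ideal (PRing K N)) (J : Ideal (PRing K N ⧸ I))
    (d : ℤ) : ℕ :=
  Module.finrank K ↥((Submodule.restrictScalars K J) ⊓ degPiece1 K I d)

/-- The degree `deg_Y(q)` of a point `q` in `Y ⊆ P^N`: the minimal degree of
a homogeneous separator of `q` in `Y`. -/
def deg1 {N : ℕ} (Y : Finset (Fin (N+1) → K)) (q : Fin (N+1) → K) : ℕ :=
  sInf {d : ℕ | ∃ F : PRing K N, IsHom1 K F (d : ℤ) ∧ eval q F ≠ 0 ∧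
    ∀ q' ∈ Y, q' ≠ q → eval q' F = 0}

/-- The regularity index of the Hilbert function of `Y ⊆ P^N`. -/
def regIndex1 {N : ℕ} (Y : Finset (Fin (N+1) → K)) : ℕ :=
  sInf {r : ℕ | ∀ i : ℕ, r ≤ i → HF1 K Y (i : ℤ) = Y.card}

/-- `Y ⊆ P^N` is a Cayley-Bacharach scheme. -/
def IsCB1 {N : ℕ} (Y : Finset (Fin (N+1) → K)) : Prop :=
  ∀ q ∈ Y, deg1 K Y q = regIndex1 K Y

/- ### Kähler differents -/

/-- The variables `X_1,…,X_m,Y_1,…,Y_n` indexed by `Fin (m+n)`. -/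
def bvar (m n : ℕ) (v : Fin (m+n)) : Fin (m+1) ⊕ Fin (n+1) :=
  if h : (v : ℕ) < m then Sum.inl ⟨(v : ℕ) + 1, by omega⟩
  else Sum.inr ⟨(v : ℕ) - m + 1, by have hv := v.isLt; omega⟩

/-- The Kähler different of `R = S/I` w.r.t. a system of generators `F` of
`I`: the ideal generated by the `(m+n)×(m+n)`-minors of the Jacobian matrix
`(∂F_k/∂X_i, ∂F_k/∂Y_j)`. -/
def kdiffB (I : Ideal (BiRing K m n)) {r : ℕ} (F : Fin r → BiRing K m n) :
    Ideal (BiRing K m n ⧸ I) :=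
  Ideal.span (Set.range fun ρ : Fin (m+n) → Fin r =>
    Ideal.Quotient.mk I (Matrix.det (Matrix.of fun u v : Fin (m+n) =>
      pderiv (bvar m n v) (F (ρ u)))))

/-- The Kähler different of `K[X_0,…,X_N]/I` w.r.t. a system of generators
`F` of `I` (minors w.r.t. the variables `X_1,…,X_N`). -/
def kdiff1 {N : ℕ} (I : Ideal (PRing K N)) {r : ℕ} (F : Fin r → PRing K N) :
    Ideal (PRing K N ⧸ I) :=
  Ideal.span (Set.range fun ρ : Fin N → Fin r =>
    Ideal.Quotient.mk I (Matrix.det (Matrix.of fun u v : Fin N =>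
      pderiv (Fin.succ v) (F (ρ u)))))

/-- The extension `ϑ_{𝕏₁} R_𝕏` to `R_𝕏 = S/I` of the Kähler different of
`𝕏₁ ⊆ P^m` computed from a system of generators `F` of `I_{𝕏₁}`. -/
def kdiffExtL (I : Ideal (BiRing K m n)) {r : ℕ} (F : Fin r → PRing K m) :
    Ideal (BiRing K m n ⧸ I) :=
  Ideal.span (Set.range fun ρ : Fin m → Fin r =>
    Ideal.Quotient.mk I (rename Sum.inl (Matrix.det (Matrix.of fun u v : Fin m =>
      pderiv (Fin.succ v) (F (ρ u))))))

/-- The extension `ϑ_{𝕏₂} R_𝕏` to `R_𝕏 = S/I` of the Kähler different of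
`𝕏₂ ⊆ P^n` computed from a system of generators `G` of `I_{𝕏₂}`. -/
def kdiffExtR (I : Ideal (BiRing K m n)) {r : ℕ} (G : Fin r → PRing K n) :
    Ideal (BiRing K m n ⧸ I) :=
  Ideal.span (Set.range fun ρ : Fin n → Fin r =>
    Ideal.Quotient.mk I (rename Sum.inr (Matrix.det (Matrix.of fun u v : Fin n =>
      pderiv (Fin.succ v) (G (ρ u))))))

/- ### Regular sequences, ACM, complete intersections -/

/-- `a, b` form a regular sequence. -/
def RegPair {A : Type*} [CommRing A] (a b : A) : Prop :=
  (∀ z : A, a * z = 0 → z = 0) ∧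
  (∀ z : A, b * z ∈ Ideal.span {a} → z ∈ Ideal.span {a})

/-- The image `x₀` of `X_0` in `S/I`. -/
def x0B (I : Ideal (BiRing K m n)) : BiRing K m n ⧸ I :=
  Ideal.Quotient.mk I (MvPolynomial.X (Sum.inl 0))

/-- The image `y₀` of `Y_0` in `S/I`. -/
def y0B (I : Ideal (BiRing K m n)) : BiRing K m n ⧸ I :=
  Ideal.Quotient.mk I (MvPolynomial.X (Sum.inr 0))

/-- The standing assumption for ACM sets of points: (after a change of
coordinates) `x₀, y₀` form a regular sequence in `R_𝕏`. -/
def ACMxy (𝕏 : Finset (BiPt K m n)) : Prop :=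
  RegPair (x0B K (vIdealB K 𝕏)) (y0B K (vIdealB K 𝕏))

/-- `𝕏` is arithmetically Cohen-Macaulay: some bihomogeneous linear forms
`ℓ` of degree `(1,0)` and `ℓ'` of degree `(0,1)` give a regular sequence in
`R_𝕏` (for points this is equivalent to `depth R_𝕏 = 2`). -/
def IsACM (𝕏 : Finset (BiPt K m n)) : Prop :=
  ∃ l l' : BiRing K m n, IsBihom K l (1, 0) ∧ IsBihom K l' (0, 1) ∧
    RegPair (Ideal.Quotient.mk (vIdealB K 𝕏) l) (Ideal.Quotient.mk (vIdealB K 𝕏) l')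

/-- A regular sequence in a commutative ring, given as a list:
each entry is a non-zerodivisor modulo the preceding ones, and the list
generates a proper ideal. -/
def IsRegSeq {A : Type*} [CommRing A] (l : List A) : Prop :=
  (∀ (i : ℕ) (h : i < l.length), ∀ z : A,
      l.get ⟨i, h⟩ * z ∈ Ideal.span {x | x ∈ l.take i} →
      z ∈ Ideal.span {x | x ∈ l.take i}) ∧
  Ideal.span {x | x ∈ l} ≠ ⊤

/-- `𝕏` is a complete intersection of type `(d_1,…,d_m,d'_1,…,d'_n)`. -/
def IsCIB (𝕏 : Finset (BiPt K m n)) (d : Fin m → ℕ) (d' : Fin n → ℕ) : Prop :=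
  ∃ (F : Fin m → BiRing K m n) (G : Fin n → BiRing K m n),
    (∀ i, IsBihom K (F i) ((d i : ℤ), 0)) ∧
    (∀ j, IsBihom K (G j) (0, (d' j : ℤ))) ∧
    IsRegSeq (List.ofFn F ++ List.ofFn G) ∧
    Ideal.span (Set.range F ∪ Set.range G) = vIdealB K 𝕏

/-- `Y ⊆ P^N` is a complete intersection of type `(d_1,…,d_N)`. -/
def IsCI1 {N : ℕ} (Y : Finset (Fin (N+1) → K)) (d : Fin N → ℕ) : Prop :=
  ∃ F : Fin N → PRing K N,
    (∀ i, IsHom1 K (F i) (d i : ℤ)) ∧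
    IsRegSeq (List.ofFn F) ∧
    Ideal.span (Set.range F) = vIdeal1 K Y

/- ### Separators and the Cayley-Bacharach property -/

/-- `F` is a separator of `p` in `𝕏`. -/
def IsSepB (𝕏 : Finset (BiPt K m n)) (p : BiPt K m n) (F : BiRing K m n) : Prop :=
  evalB K p F ≠ 0 ∧ ∀ q ∈ 𝕏, q ≠ p → evalB K q F = 0

/-- The set of degrees of bihomogeneous separators of `p` in `𝕏`. -/
def sepDegsB (𝕏 : Finset (BiPt K m n)) (p : BiPt K m n) : Set (ℤ × ℤ) :=
  {d | ∃ F, IsBihom K F d ∧ IsSepB K 𝕏 p F}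

/-- `deg_𝕏(p)`: the set of degrees of minimal separators of `p` in `𝕏`
(mimimality w.r.t. the componentwise order). -/
def minSepDegsB (𝕏 : Finset (BiPt K m n)) (p : BiPt K m n) : Set (ℤ × ℤ) :=
  {d ∈ sepDegsB K 𝕏 p | ∀ d' ∈ sepDegsB K 𝕏 p, ¬ d' < d}

/-- `𝕏` has the Cayley-Bacharach property: the Hilbert function of
`𝕏 \ {p}` is independent of the choice of `p ∈ 𝕏`. -/
def HasCB (𝕏 : Finset (BiPt K m n)) : Prop :=
  ∀ p ∈ 𝕏, ∀ q ∈ 𝕏, ∀ d : ℤ × ℤ, HFB K (𝕏.erase p) d = HFB K (𝕏.erase q) d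

/- ### Star property and fibres -/

/-- The `(⋆)`-property. -/
def StarProp (𝕏 : Finset (BiPt K m n)) : Prop :=
  ∀ p ∈ 𝕏, ∀ q ∈ 𝕏, ((p.1, q.2) ∈ 𝕏 ∨ (q.1, p.2) ∈ 𝕏)

/-- `V_j = π₁(π₂⁻¹(q'_j) ∩ 𝕏)` for `q'_j = p.2`. -/
def Vset (𝕏 : Finset (BiPt K m n)) (p : BiPt K m n) : Finset (Fin (m+1) → K) :=
  (𝕏.filter fun q => q.2 = p.2).image Prod.fst

/-- `W_i = π₂(π₁⁻¹(q_i) ∩ 𝕏)` for `q_i = p.1`. -/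
def Wset (𝕏 : Finset (BiPt K m n)) (p : BiPt K m n) : Finset (Fin (n+1) → K) :=
  (𝕏.filter fun q => q.1 = p.1).image Prod.snd

end MultiProjPoints

/-!
Evaluation at the points of `𝕏` identifies the part of `R_𝕏` of bidegree `(i, k)` with the
subspace `U ^ i * W ^ k` of the algebra `𝕏 → K`, where `U` and `W` are the spaces of values on `𝕏`
of the linear forms in the `X_i` and in the `Y_j`. As `K` is infinite, `U` contains a nowhere
vanishing function `l`. Multiplication by `l` is injective, so `HF_𝕏(i, k) = HF_𝕏(i + 1, k)` means
that `U ^ (i + 1) * W ^ k = l * (U ^ i * W ^ k)`, an equality which persists after multiplication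
by powers of `U` and `W`. Hence `k = 0` gives the largest of the indices `ν_k`; there
`HF_𝕏(i, 0) = HF_{𝕏₁}(i)`, and this is `#𝕏₁` for large `i` because products of linear forms
separate the points of `𝕏₁`.
-/

namespace MultiProjPoints

open Module

section Stabilization

theorem iSup_sInf_eq_sInf_bot {ι : Type*} [Preorder ι] [OrderBot ι] {S : ι → Set ℕ}
    (hS : Monotone S) (hbot : (S ⊥).Nonempty) : ⨆ k, sInf (S k) = sInf (S ⊥) :=
  IsGreatest.csSup_eq ⟨Set.mem_range_self ⊥,
    Set.forall_mem_range.2 fun _ => Nat.sInf_le (hS bot_le (Nat.sInf_mem hbot))⟩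

theorem eq_succ_iff_forall_ge_eq {α : Type*} {f : ℕ → α} {c : α}
    (hstable : ∀ i, f i = f (i + 1) → f (i + 1) = f (i + 2))
    (hc : ∃ r, ∀ i, r ≤ i → f i = c) (r : ℕ) :
    f r = f (r + 1) ↔ ∀ i, r ≤ i → f i = c := by
  refine ⟨fun h => ?_, fun h => (h r le_rfl).trans (h (r + 1) r.le_succ).symm⟩
  have hsucc : ∀ i, r ≤ i → f i = f (i + 1) :=
    fun i hi => Nat.le_induction h (fun i _ => hstable i) i hi
  have hconst : ∀ i, r ≤ i → f i = f r :=
    fun i hi => Nat.le_induction rfl (fun i hi ih => (hsucc i hi).symm.trans ih) i hi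
  obtain ⟨r₀, hr₀⟩ := hc
  have hfr : f r = c := (hconst _ (le_max_left r r₀)).symm.trans (hr₀ _ (le_max_right r r₀))
  exact fun i hi => (hconst i hi).trans hfr

theorem iSup_sInf_eq_succ {α : Type*} {h : ℕ → ℕ → α} {c : α}
    (hstable : ∀ a b i k, h i k = h (i + 1) k → h (i + a) (k + b) = h (i + a + 1) (k + b))
    (hc : ∃ r, ∀ i, r ≤ i → h i 0 = c) :
    ⨆ k, sInf {i | h i k = h (i + 1) k} = sInf {r | ∀ i, r ≤ i → h i 0 = c} := by
  have hmono : Monotone fun k => {i | h i k = h (i + 1) k} :=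
    monotone_nat_of_le_succ fun k i => hstable 0 1 i k
  have hzero : {i | h i 0 = h (i + 1) 0} = {r | ∀ i, r ≤ i → h i 0 = c} :=
    Set.ext (eq_succ_iff_forall_ge_eq (f := (h · 0)) (fun i => hstable 1 0 i 0) hc)
  have hne : {i | h i 0 = h (i + 1) 0}.Nonempty := hzero ▸ hc
  exact (iSup_sInf_eq_sInf_bot hmono hne).trans (congrArg sInf hzero)

end Stabilization

section ProductsOfSubspaces

section CommRing

variable {R A : Type*} [CommRing R] [CommRing A] [Algebra R A] {l : A}

theorem finrank_span_singleton_mul (hl : IsLeftRegular l) (T : Submodule R A) :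
    finrank R ↥(Submodule.span R {l} * T) = finrank R T := by
  have hmap : Submodule.span R {l} * T = T.map (LinearMap.mulLeft R l) := by
    ext x
    simp only [Submodule.mem_span_singleton_mul, Submodule.mem_map, LinearMap.mulLeft_apply]
  rw [hmap]
  exact (Submodule.equivMapOfInjective (LinearMap.mulLeft R l) hl T).finrank_eq.symm

theorem span_singleton_mul_le_mul {U : Submodule R A} (hlU : l ∈ U) (T : Submodule R A) :
    Submodule.span R {l} * T ≤ U * T :=
  mul_le_mul' (Submodule.span_le.2 (Set.singleton_subset_iff.2 hlU)) le_rfl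

end CommRing

variable {F A : Type*} [Field F] [CommRing A] [Algebra F A] [FiniteDimensional F A]
  {U W : Submodule F A} {l : A}

theorem finrank_le_finrank_mul (hlU : l ∈ U) (hl : IsLeftRegular l) (T : Submodule F A) :
    finrank F T ≤ finrank F ↥(U * T) :=
  (finrank_span_singleton_mul hl T).symm.trans_le
    (Submodule.finrank_mono (span_singleton_mul_le_mul hlU T))

theorem finrank_mul_eq_finrank_mul_mul (hlU : l ∈ U) (hl : IsLeftRegular l) {T : Submodule F A}
    (hT : finrank F T = finrank F ↥(U * T)) (W : Submodule F A) :
    finrank F ↥(W * T) = finrank F ↥(U * (W * T)) := by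
  have hUT : Submodule.span F {l} * T = U * T :=
    Submodule.eq_of_le_of_finrank_eq (span_singleton_mul_le_mul hlU T)
      ((finrank_span_singleton_mul hl T).trans hT)
  rw [mul_left_comm, ← hUT, mul_left_comm, finrank_span_singleton_mul hl]

theorem finrank_pow_mul_pow_stable (hlU : l ∈ U) (hl : IsLeftRegular l) (a b i k : ℕ)
    (h : finrank F ↥(U ^ i * W ^ k) = finrank F ↥(U ^ (i + 1) * W ^ k)) :
    finrank F ↥(U ^ (i + a) * W ^ (k + b)) = finrank F ↥(U ^ (i + a + 1) * W ^ (k + b)) := by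
  have hsucc (i k : ℕ) : U ^ (i + 1) * W ^ k = U * (U ^ i * W ^ k) := by ring
  have hadd : U ^ (i + a) * W ^ (k + b) = U ^ a * W ^ b * (U ^ i * W ^ k) := by ring
  rw [hsucc] at h ⊢
  rw [hadd]
  exact finrank_mul_eq_finrank_mul_mul hlU hl h (U ^ a * W ^ b)

theorem iSup_sInf_finrank_pow_mul_pow (hlU : l ∈ U) (hl : IsLeftRegular l) (W : Submodule F A)
    {c : ℕ} (hc : ∃ r, ∀ i, r ≤ i → finrank F ↥(U ^ i) = c) :
    ⨆ k, sInf {i | finrank F ↥(U ^ i * W ^ k) = finrank F ↥(U ^ (i + 1) * W ^ k)} =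
      sInf {r | ∀ i, r ≤ i → finrank F ↥(U ^ i) = c} := by
  have hzero (i : ℕ) : finrank F ↥(U ^ i * W ^ 0) = finrank F ↥(U ^ i) := by
    rw [pow_zero, mul_one]
  simp only [← hzero] at hc ⊢
  exact iSup_sInf_eq_succ (finrank_pow_mul_pow_stable hlU hl) hc

end ProductsOfSubspaces

section FunctionSpaces

variable {F ι : Type*} [Field F]

theorem isLeftRegular_of_forall_ne_zero {l : ι → F} (hl : ∀ j, l j ≠ 0) : IsLeftRegular l :=
  fun _ _ h => funext fun j => mul_left_cancel₀ (hl j) (congrFun h j)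

theorem eq_top_of_forall_exists_separator [Finite ι] {V : Submodule F (ι → F)}
    (hV : ∀ j, ∃ g ∈ V, g j ≠ 0 ∧ ∀ j', j' ≠ j → g j' = 0) : V = ⊤ := by
  classical
  have := Fintype.ofFinite ι
  refine Submodule.eq_top_iff'.2 fun x => ?_
  choose g hgV hg hg' using hV
  have hx : x = ∑ j, (x j / g j j) • g j := by
    funext j
    rw [Finset.sum_apply, Finset.sum_eq_single_of_mem j (Finset.mem_univ j)
      fun b _ hb => by rw [Pi.smul_apply, hg' b j hb.symm, smul_zero]]
    exact (div_mul_cancel₀ (x j) (hg j)).symm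
  rw [hx]
  exact Submodule.sum_mem _ fun j _ => Submodule.smul_mem _ _ (hgV j)

theorem pow_card_sub_one_eq_top [Fintype ι] {U : Submodule F (ι → F)}
    (hU : ∀ j j', j' ≠ j → ∃ u ∈ U, u j ≠ 0 ∧ u j' = 0) : U ^ (Fintype.card ι - 1) = ⊤ := by
  classical
  refine eq_top_of_forall_exists_separator fun j => ?_
  choose! u huU hu hu' using hU j
  refine ⟨∏ j' ∈ Finset.univ.erase j, u j', ?_, ?_, fun j' hj' => ?_⟩
  · have hmem := SetLike.prod_mem_graded (U ^ ·) (fun _ => 1) u (F := Finset.univ.erase j)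
      fun j' hj' => (pow_one U).symm ▸ huU j' (Finset.ne_of_mem_erase hj')
    rwa [← Finset.card_eq_sum_ones, Finset.card_erase_of_mem (Finset.mem_univ j),
      Finset.card_univ] at hmem
  · rw [Finset.prod_apply]
    exact Finset.prod_ne_zero_iff.2 fun j' hj' => hu j' (Finset.ne_of_mem_erase hj')
  · rw [Finset.prod_apply]
    exact Finset.prod_eq_zero (Finset.mem_erase.2 ⟨hj', Finset.mem_univ j'⟩) (hu' j' hj')

theorem finrank_pow_eq_card_of_separating [Fintype ι] {U : Submodule F (ι → F)} {l : ι → F}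
    (hlU : l ∈ U) (hl : ∀ j, l j ≠ 0) (hU : ∀ j j', j' ≠ j → ∃ u ∈ U, u j ≠ 0 ∧ u j' = 0)
    {i : ℕ} (hi : Fintype.card ι - 1 ≤ i) : finrank F ↥(U ^ i) = Fintype.card ι := by
  have hmono : Monotone fun i => finrank F ↥(U ^ i) := monotone_nat_of_le_succ fun i => by
    rw [pow_succ']
    exact finrank_le_finrank_mul hlU (isLeftRegular_of_forall_ne_zero hl) (U ^ i)
  refine le_antisymm ((Submodule.finrank_le _).trans_eq (finrank_fintype_fun_eq_card F)) ?_
  calc Fintype.card ι = finrank F ↥(U ^ (Fintype.card ι - 1)) := by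
        rw [pow_card_sub_one_eq_top hU, finrank_top, finrank_fintype_fun_eq_card]
    _ ≤ finrank F ↥(U ^ i) := hmono hi

end FunctionSpaces

section LinearForms

variable {R F ι σ : Type*} [CommSemiring R] [Field F]

/-- The space of functions on the points `pts j` that are given by linear forms: it is spanned by
the coordinate functions. -/
def linearFormValues (pts : ι → σ → R) : Submodule R (ι → R) :=
  Submodule.span R (Set.range fun s j => pts j s)

theorem dual_comp_mem_linearFormValues [Finite σ] (pts : ι → σ → R) (f : Dual R (σ → R)) :
    (fun j => f (pts j)) ∈ linearFormValues pts := by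
  classical
  have := Fintype.ofFinite σ
  have hf : (fun j => f (pts j)) = ∑ s, f (Pi.single s 1) • fun j => pts j s := by
    funext j
    rw [f.pi_apply_eq_sum_univ, Finset.sum_apply]
    refine Finset.sum_congr rfl fun s _ => (mul_comm _ _).trans ?_
    rw [Pi.smul_apply, smul_eq_mul]
    congr 2
    funext t
    simp only [Pi.single_apply, eq_comm]
  rw [hf]
  exact Submodule.sum_mem _ fun s _ => Submodule.smul_mem _ _ (Submodule.subset_span ⟨s, rfl⟩)

theorem exists_mem_linearFormValues_forall_ne_zero [Infinite F] [Finite ι] [Finite σ]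
    {pts : ι → σ → F} (hpts : ∀ j, pts j ≠ 0) : ∃ l ∈ linearFormValues pts, ∀ j, l j ≠ 0 := by
  obtain ⟨f, hf⟩ := Module.exists_dual_forall_apply_ne_zero (K := F) pts hpts
  exact ⟨_, dual_comp_mem_linearFormValues pts f, hf⟩

theorem exists_mem_linearFormValues_separating [Finite σ] {pts : ι → σ → F} {j j' : ι}
    (h : pts j ∉ Submodule.span F {pts j'}) :
    ∃ u ∈ linearFormValues pts, u j ≠ 0 ∧ u j' = 0 := by
  obtain ⟨f, hfj, hfj'⟩ := Submodule.exists_le_ker_of_notMem h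
  exact ⟨_, dual_comp_mem_linearFormValues pts f, hfj,
    hfj' (Submodule.mem_span_singleton_self (pts j'))⟩

end LinearForms

section Evaluation

variable {R ι σ τ M : Type*} [CommRing R] [AddCommMonoid M]

/-- Simultaneous evaluation of polynomials at the points `pts j`; it realizes the graded pieces of
coordinate rings of point sets as spaces of functions. -/
def evalAt (pts : ι → σ → R) : MvPolynomial σ R →ₐ[R] (ι → R) :=
  AlgHom.pi fun j => aeval (pts j)

theorem evalAt_eq_zero_iff {pts : ι → σ → R} {G : MvPolynomial σ R} :
    evalAt pts G = 0 ↔ ∀ j, eval (pts j) G = 0 :=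
  funext_iff

theorem evalAt_comp_rename (pts : ι → τ → R) (f : σ → τ) :
    (evalAt pts).comp (rename f) = evalAt fun j => pts j ∘ f :=
  AlgHom.ext fun G => funext fun j => aeval_rename f (pts j) G

theorem map_evalAt_homogeneousSubmodule (pts : ι → σ → R) (i : ℕ) :
    (homogeneousSubmodule σ R i).map (evalAt pts).toLinearMap = linearFormValues pts ^ i := by
  have hX : (evalAt pts).toLinearMap ∘ X = fun s j => pts j s :=
    funext fun s => funext fun j => by
      rw [Function.comp_apply, AlgHom.toLinearMap_apply, evalAt, AlgHom.pi_apply, aeval_X]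
  rw [← homogeneousSubmodule_one_pow, Submodule.map_pow, homogeneousSubmodule_one_eq_span_X,
    Submodule.map_span, ← Set.range_comp, hX, linearFormValues]

/-- The ideal generated by the `w`-homogeneous polynomials vanishing at all points `pts j`; it
covers both `vIdealB` and `vIdeal1`. -/
def weightedVanishingIdeal (w : σ → M) (pts : ι → σ → R) : Ideal (MvPolynomial σ R) :=
  Ideal.span {G | (∃ d, IsWeightedHomogeneous w G d) ∧ ∀ j, eval (pts j) G = 0}

theorem mem_weightedVanishingIdeal_iff {w : σ → M} {pts : ι → σ → R} {d : M}
    {G : MvPolynomial σ R} (hG : IsWeightedHomogeneous w G d) :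
    G ∈ weightedVanishingIdeal w pts ↔ evalAt pts G = 0 := by
  have hle : weightedVanishingIdeal w pts ≤ RingHom.ker (evalAt pts) :=
    Ideal.span_le.2 fun _ hH => evalAt_eq_zero_iff.2 hH.2
  exact ⟨fun h => hle h, fun h => Ideal.subset_span ⟨⟨d, hG⟩, evalAt_eq_zero_iff.1 h⟩⟩

theorem finrank_map_eq_of_eq_zero_iff {V V₁ V₂ : Type*} [AddCommGroup V] [Module R V]
    [AddCommGroup V₁] [Module R V₁] [AddCommGroup V₂] [Module R V₂] {f : V →ₗ[R] V₁}
    {g : V →ₗ[R] V₂} {T : Submodule R V} (h : ∀ x ∈ T, f x = 0 ↔ g x = 0) :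
    finrank R (T.map f) = finrank R (T.map g) := by
  have hker : LinearMap.ker (f.domRestrict T) = LinearMap.ker (g.domRestrict T) :=
    Submodule.ext fun x => h x x.2
  rw [← LinearMap.range_domRestrict, ← LinearMap.range_domRestrict,
    ← (f.domRestrict T).quotKerEquivRange.finrank_eq,
    ← (g.domRestrict T).quotKerEquivRange.finrank_eq, hker]

theorem finrank_map_mk_weightedVanishingIdeal (w : σ → M) (pts : ι → σ → R) (d : M) :
    finrank R ((weightedHomogeneousSubmodule R w d).map
        (Ideal.Quotient.mkₐ R (weightedVanishingIdeal w pts)).toLinearMap) =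
      finrank R ((weightedHomogeneousSubmodule R w d).map (evalAt pts).toLinearMap) :=
  finrank_map_eq_of_eq_zero_iff fun _ hG =>
    Ideal.Quotient.eq_zero_iff_mem.trans (mem_weightedVanishingIdeal_iff hG)

end Evaluation

section Gradings

variable {R σ τ M : Type*} [CommSemiring R] [AddCommMonoid M] {m n N : ℕ}

theorem weight_const (c : M) (a : σ →₀ ℕ) : Finsupp.weight (fun _ => c) a = a.degree • c := by
  rw [Finsupp.weight_apply, Finsupp.degree_apply, Finset.sum_smul, Finsupp.sum]

theorem weight_mapDomain (w : τ → M) (f : σ → τ) (a : σ →₀ ℕ) :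
    Finsupp.weight w (a.mapDomain f) = Finsupp.weight (w ∘ f) a :=
  Finsupp.linearCombination_mapDomain ℕ f a

theorem isWeightedHomogeneous_const_iff {M : Type*} [AddCancelCommMonoid M] [IsAddTorsionFree M]
    {c : M} (hc : c ≠ 0) {G : MvPolynomial σ R} {i : ℕ} :
    IsWeightedHomogeneous (fun _ => c) G (i • c) ↔ G.IsHomogeneous i := by
  have hone (a : σ →₀ ℕ) : Finsupp.weight 1 a = a.degree := by
    rw [Finsupp.degree_eq_weight_one, Pi.one_def]
  simp only [IsHomogeneous, IsWeightedHomogeneous, weight_const,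
    ((IsAddLeftRegular.all c).nsmul_injective hc).eq_iff, hone]

theorem isWeightedHomogeneous_rename {w : τ → M} {f : σ → τ} {G : MvPolynomial σ R} {d : M}
    (hG : IsWeightedHomogeneous (w ∘ f) G d) : IsWeightedHomogeneous w (rename f G) d := by
  intro e he
  obtain ⟨a, rfl, ha⟩ := coeff_rename_ne_zero _ _ _ he
  rw [weight_mapDomain, hG ha]

theorem weightedHomogeneousSubmodule_wt1 (i : ℕ) :
    weightedHomogeneousSubmodule R (wt1 N) (i : ℤ) = homogeneousSubmodule (Fin (N + 1)) R i := by
  ext G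
  rw [← nsmul_one]
  exact isWeightedHomogeneous_const_iff one_ne_zero

theorem weight_biwt_sumElim (a : Fin (m + 1) →₀ ℕ) (b : Fin (n + 1) →₀ ℕ) :
    Finsupp.weight (biwt m n) (a.sumElim b) = ((a.degree : ℤ), (b.degree : ℤ)) := by
  rw [Finsupp.sumElim_eq_add, map_add, weight_mapDomain, weight_mapDomain, biwt, Sum.elim_comp_inl,
    Sum.elim_comp_inr, weight_const, weight_const]
  simp

theorem isWeightedHomogeneous_biwt_rename_mul_rename {G : MvPolynomial (Fin (m + 1)) R}
    {H : MvPolynomial (Fin (n + 1)) R} {i k : ℕ} (hG : G.IsHomogeneous i) (hH : H.IsHomogeneous k) :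
    IsWeightedHomogeneous (biwt m n) (rename Sum.inl G * rename Sum.inr H) ((i : ℤ), (k : ℤ)) := by
  have hGH := (isWeightedHomogeneous_rename (w := biwt m n) (f := Sum.inl)
    ((isWeightedHomogeneous_const_iff (c := ((1 : ℤ), (0 : ℤ))) (by simp)).2 hG)).mul
    (isWeightedHomogeneous_rename (w := biwt m n) (f := Sum.inr)
    ((isWeightedHomogeneous_const_iff (c := ((0 : ℤ), (1 : ℤ))) (by simp)).2 hH))
  simpa using hGH

theorem weightedHomogeneousSubmodule_biwt (i k : ℕ) :
    weightedHomogeneousSubmodule R (biwt m n) ((i : ℤ), (k : ℤ)) =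
      (homogeneousSubmodule (Fin (m + 1)) R i).map (rename Sum.inl).toLinearMap *
        (homogeneousSubmodule (Fin (n + 1)) R k).map (rename Sum.inr).toLinearMap := by
  refine le_antisymm (fun G hG => ?_) (Submodule.mul_le.2 ?_)
  · rw [G.as_sum]
    refine Submodule.sum_mem _ fun e he => ?_
    obtain ⟨⟨a, b⟩, rfl⟩ := Finsupp.sumFinsuppEquivProdFinsupp.symm.surjective e
    change monomial (a.sumElim b) _ ∈ _
    have hdeg := hG (mem_support_iff.1 he)
    obtain ⟨ha, hb⟩ := Prod.ext_iff.1 ((weight_biwt_sumElim a b).symm.trans hdeg)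
    have hsplit (c : R) : monomial (a.sumElim b) c =
        rename Sum.inl (monomial a c) * rename Sum.inr (monomial b 1) := by
      rw [rename_monomial, rename_monomial, monomial_mul, mul_one, Finsupp.sumElim_eq_add]
    rw [hsplit]
    exact Submodule.mul_mem_mul
      ⟨_, isHomogeneous_monomial _ (Nat.cast_injective ha), rfl⟩
      ⟨_, isHomogeneous_monomial _ (Nat.cast_injective hb), rfl⟩
  · rintro _ ⟨G, hG, rfl⟩ _ ⟨H, hH, rfl⟩
    exact isWeightedHomogeneous_biwt_rename_mul_rename hG hH

end Gradings

section HilbertFunctions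

variable {F : Type} [Field F] {m n N : ℕ}

theorem vIdealB_eq_weightedVanishingIdeal (𝕏 : Finset (BiPt F m n)) :
    vIdealB F 𝕏 = weightedVanishingIdeal (biwt m n) fun p : 𝕏 => Sum.elim p.1.1 p.1.2 := by
  simp only [vIdealB, weightedVanishingIdeal, Subtype.forall, IsBihom, evalB]

theorem vIdeal1_eq_weightedVanishingIdeal {ι : Type*} {pts : ι → Fin (N + 1) → F}
    {Y : Finset (Fin (N + 1) → F)} (hY : Set.range pts = Y) :
    vIdeal1 F Y = weightedVanishingIdeal (wt1 N) pts := by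
  simp only [vIdeal1, weightedVanishingIdeal, IsHom1, ← Finset.mem_coe, ← hY, Set.forall_mem_range]

theorem HFB_eq_finrank_pow_mul_pow (𝕏 : Finset (BiPt F m n)) (i k : ℕ) :
    HFB F 𝕏 ((i : ℤ), (k : ℤ)) =
      finrank F ↥(linearFormValues (fun p : 𝕏 => p.1.1) ^ i *
        linearFormValues (fun p : 𝕏 => p.1.2) ^ k) := by
  rw [HFB, HFI, degPieceB, vIdealB_eq_weightedVanishingIdeal,
    finrank_map_mk_weightedVanishingIdeal, weightedHomogeneousSubmodule_biwt, Submodule.map_mul,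
    ← Submodule.map_comp, ← Submodule.map_comp, ← AlgHom.comp_toLinearMap,
    ← AlgHom.comp_toLinearMap, evalAt_comp_rename, evalAt_comp_rename,
    map_evalAt_homogeneousSubmodule, map_evalAt_homogeneousSubmodule]
  rfl

theorem HF1_eq_finrank_pow {ι : Type*} {pts : ι → Fin (N + 1) → F} {Y : Finset (Fin (N + 1) → F)}
    (hY : Set.range pts = Y) (i : ℕ) :
    HF1 F Y (i : ℤ) = finrank F ↥(linearFormValues pts ^ i) := by
  rw [HF1, degPiece1, vIdeal1_eq_weightedVanishingIdeal hY, finrank_map_mk_weightedVanishingIdeal,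
    weightedHomogeneousSubmodule_wt1, map_evalAt_homogeneousSubmodule]

theorem GoodSet.notMem_span_singleton {Y : Finset (Fin (N + 1) → F)} (hY : GoodSet F Y)
    {p q : Fin (N + 1) → F} (hp : p ∈ Y) (hq : q ∈ Y) (hpq : p ≠ q) :
    p ∉ Submodule.span F {q} := by
  intro hspan
  obtain ⟨c, hc⟩ := Submodule.mem_span_singleton.1 hspan
  have hc₀ : c ≠ 0 := by
    rintro rfl
    exact hY.1 p hp (hc.symm.trans (zero_smul F q))
  exact hpq (hY.2 p hp q hq ⟨c, hc₀, hc.symm⟩)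

theorem exists_forall_ge_HF1_eq_card [Infinite F] {Y : Finset (Fin (N + 1) → F)}
    (hY : GoodSet F Y) : ∃ r : ℕ, ∀ i : ℕ, r ≤ i → HF1 F Y (i : ℤ) = Y.card := by
  have hrange : Set.range ((↑) : Y → Fin (N + 1) → F) = Y := Subtype.range_coe
  obtain ⟨l, hlU, hl⟩ :=
    exists_mem_linearFormValues_forall_ne_zero (pts := ((↑) : Y → Fin (N + 1) → F))
      fun q => hY.1 q q.2
  refine ⟨Fintype.card Y - 1, fun i hi => ?_⟩
  rw [HF1_eq_finrank_pow hrange, ← Fintype.card_coe]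
  exact finrank_pow_eq_card_of_separating hlU hl (fun p q hqp =>
    exists_mem_linearFormValues_separating
      (hY.notMem_span_singleton p.2 q.2 (Subtype.coe_ne_coe.2 hqp.symm))) hi

theorem iSup_sInf_finrank_eq_regIndex1 [Infinite F] {ι : Type*} [Finite ι]
    {pts : ι → Fin (N + 1) → F} {Y : Finset (Fin (N + 1) → F)} (hpts : Set.range pts = Y)
    (hY : GoodSet F Y) (W : Submodule F (ι → F)) :
    ⨆ k, sInf {i | finrank F ↥(linearFormValues pts ^ i * W ^ k) =
        finrank F ↥(linearFormValues pts ^ (i + 1) * W ^ k)} = regIndex1 F Y := by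
  obtain ⟨l, hlU, hl⟩ := exists_mem_linearFormValues_forall_ne_zero (pts := pts) fun j =>
    hY.1 _ (Finset.mem_coe.1 (hpts ▸ Set.mem_range_self j))
  simp only [regIndex1, HF1_eq_finrank_pow hpts]
  refine iSup_sInf_finrank_pow_mul_pow hlU (isLeftRegular_of_forall_ne_zero hl) W ?_
  simpa only [HF1_eq_finrank_pow hpts] using exists_forall_ge_HF1_eq_card hY

variable [DecidableEq F] {𝕏 : Finset (BiPt F m n)}

theorem GoodConfig.goodSet_image_fst (h𝕏 : GoodConfig F 𝕏) : GoodSet F (𝕏.image Prod.fst) :=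
  ⟨Finset.forall_mem_image.2 fun p hp => (h𝕏.1 p hp).1,
    Finset.forall_mem_image.2 fun p hp => Finset.forall_mem_image.2 fun q hq => h𝕏.2.1 p hp q hq⟩

theorem GoodConfig.goodSet_image_snd (h𝕏 : GoodConfig F 𝕏) : GoodSet F (𝕏.image Prod.snd) :=
  ⟨Finset.forall_mem_image.2 fun p hp => (h𝕏.1 p hp).2,
    Finset.forall_mem_image.2 fun p hp => Finset.forall_mem_image.2 fun q hq => h𝕏.2.2 p hp q hq⟩

end HilbertFunctions

end MultiProjPoints

open Module MultiProjPoints in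
theorem statement_1_general (K : Type) [Field K] [Infinite K] [DecidableEq K]
    (m n : ℕ) (𝕏 : Finset (BiPt K m n)) (hgood : GoodConfig K 𝕏) :
    (∀ i k : ℕ, HFB K 𝕏 ((i : ℤ), (k : ℤ)) = HFB K 𝕏 ((i : ℤ) + 1, (k : ℤ)) →
        HFB K 𝕏 ((i : ℤ), (k : ℤ) + 1) = HFB K 𝕏 ((i : ℤ) + 1, (k : ℤ) + 1)) ∧
    (∀ l j : ℕ, HFB K 𝕏 ((l : ℤ), (j : ℤ)) = HFB K 𝕏 ((l : ℤ), (j : ℤ) + 1) →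
        HFB K 𝕏 ((l : ℤ) + 1, (j : ℤ)) = HFB K 𝕏 ((l : ℤ) + 1, (j : ℤ) + 1)) ∧
    (⨆ k : ℕ, sInf {i : ℕ |
        HFB K 𝕏 ((i : ℤ), (k : ℤ)) = HFB K 𝕏 ((i : ℤ) + 1, (k : ℤ))}) =
      regIndex1 K (𝕏.image Prod.fst) ∧
    (⨆ l : ℕ, sInf {j : ℕ |
        HFB K 𝕏 ((l : ℤ), (j : ℤ)) = HFB K 𝕏 ((l : ℤ), (j : ℤ) + 1)}) =
      regIndex1 K (𝕏.image Prod.snd) := by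
  obtain ⟨u, huU, hu⟩ := exists_mem_linearFormValues_forall_ne_zero
    (pts := fun p : 𝕏 => p.1.1) fun p => (hgood.1 p p.2).1
  obtain ⟨w, hwW, hw⟩ := exists_mem_linearFormValues_forall_ne_zero
    (pts := fun p : 𝕏 => p.1.2) fun p => (hgood.1 p p.2).2
  have hfst : Set.range (fun p : 𝕏 => p.1.1) = 𝕏.image Prod.fst := by ext; simp
  have hsnd : Set.range (fun p : 𝕏 => p.1.2) = 𝕏.image Prod.snd := by ext; simp
  have hcomm (i k : ℕ) : HFB K 𝕏 ((i : ℤ), (k : ℤ)) =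
      finrank K ↥(linearFormValues (fun p : 𝕏 => p.1.2) ^ k *
        linearFormValues (fun p : 𝕏 => p.1.1) ^ i) := by
    rw [HFB_eq_finrank_pow_mul_pow, mul_comm]
  simp only [← Nat.cast_succ]
  refine ⟨fun i k => ?_, fun l j => ?_, ?_, ?_⟩
  · simp only [HFB_eq_finrank_pow_mul_pow]
    exact finrank_pow_mul_pow_stable huU (isLeftRegular_of_forall_ne_zero hu) 0 1 i k
  · simp only [hcomm]
    exact finrank_pow_mul_pow_stable hwW (isLeftRegular_of_forall_ne_zero hw) 0 1 j l
  · simp only [HFB_eq_finrank_pow_mul_pow]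
    exact iSup_sInf_finrank_eq_regIndex1 hfst hgood.goodSet_image_fst _
  · simp only [hcomm]
    exact iSup_sInf_finrank_eq_regIndex1 hsnd hgood.goodSet_image_snd _

open MultiProjPoints in
/-- Lemma 2.5: stabilization of the Hilbert function of a
finite set of points in `P^m × P^n`, and identification of `(ν, ϱ)` with the
regularity indices `(r_{𝕏₁}, r_{𝕏₂})`. -/
theorem statement_1 (K : Type) [Field K] [CharZero K] [DecidableEq K]
    (m n : ℕ) (𝕏 : Finset (BiPt K m n)) (hgood : GoodConfig K 𝕏)
    (hne : 𝕏.Nonempty) :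
    (∀ i k : ℕ, HFB K 𝕏 ((i : ℤ), (k : ℤ)) = HFB K 𝕏 ((i : ℤ) + 1, (k : ℤ)) →
        HFB K 𝕏 ((i : ℤ), (k : ℤ) + 1) = HFB K 𝕏 ((i : ℤ) + 1, (k : ℤ) + 1)) ∧
    (∀ l j : ℕ, HFB K 𝕏 ((l : ℤ), (j : ℤ)) = HFB K 𝕏 ((l : ℤ), (j : ℤ) + 1) →
        HFB K 𝕏 ((l : ℤ) + 1, (j : ℤ)) = HFB K 𝕏 ((l : ℤ) + 1, (j : ℤ) + 1)) ∧
    (⨆ k : ℕ, sInf {i : ℕ |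
        HFB K 𝕏 ((i : ℤ), (k : ℤ)) = HFB K 𝕏 ((i : ℤ) + 1, (k : ℤ))}) =
      regIndex1 K (𝕏.image Prod.fst) ∧
    (⨆ l : ℕ, sInf {j : ℕ |
        HFB K 𝕏 ((l : ℤ), (j : ℤ)) = HFB K 𝕏 ((l : ℤ), (j : ℤ) + 1)}) =
      regIndex1 K (𝕏.image Prod.snd) :=
  statement_1_general K m n 𝕏 hgood
end
end

section
/- Let X = {p_1,...,p_s} be an ACM set of s distinct points in P^m × P^n. There is an exact sequence of bigraded R_X-modules 0 → R_X dx_0 ⊕ R_X dy_0 → Ω^1_{R_X/K} → Ω^1_{R_X/R_o} → 0, where the second map sends g·df to g·d_{R_X/R_o} f. In particular, for all (i,j) ∈ N^2, HF_{Ω^1_{R_X/R_o}}(i,j) = m·HF_X(i−1,j) + n·HF_X(i,j−1) + HF_X(i,j) − HF_Y(i,j), where Y is the subscheme of P^m × P^n defined by I_Y = I_{p_1}^2 ∩ ... ∩ I_{p_s}^2. -/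
/- Common setup: finite sets of points in the multiprojective space
   `P^m x P^n` over a field `K` of characteristic zero, their bihomogeneous
   vanishing ideals, bigraded Hilbert functions, Kähler differents,
   separators, Cayley-Bacharach property and complete intersections. -/

open MvPolynomial

set_option maxHeartbeats 1000000
set_option synthInstance.maxHeartbeats 400000

noncomputable section

namespace MultiProjPoints

variable (K : Type) [Field K] [CharZero K] [DecidableEq K] {m n : ℕ}

/-- The ideal `I_𝕐 = I_{p_1}² ∩ ⋯ ∩ I_{p_s}²` of the double-point scheme. -/
def dblIdeal (𝕏 : Finset (BiPt K m n)) : Ideal (BiRing K m n) :=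
  ⨅ p ∈ 𝕏, (ptIdealB K p) ^ 2

/-- The subalgebra `R_o = K[x₀, y₀]` of `R_𝕏 = S/I`. -/
def Ro (I : Ideal (BiRing K m n)) : Subalgebra K (BiRing K m n ⧸ I) :=
  Algebra.adjoin K {x0B K I, y0B K I}

/-- The degree-`d` piece of the bigraded module `Ω¹_{R_𝕏/R_o}`:
the `K`-span of the elements `f · d g` with `f, g` bihomogeneous of degrees
adding up to `d`. -/
def omegaRelPiece (I : Ideal (BiRing K m n)) (d : ℤ × ℤ) :
    Submodule K (KaehlerDifferential (↥(Ro K I)) (BiRing K m n ⧸ I)) :=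
  Submodule.span K {ω | ∃ d₁ d₂ : ℤ × ℤ, d₁ + d₂ = d ∧
    ∃ f ∈ degPieceB K I d₁, ∃ g ∈ degPieceB K I d₂,
      ω = f • (KaehlerDifferential.D (↥(Ro K I)) (BiRing K m n ⧸ I)) g}

/-- The Hilbert function of the bigraded module `Ω¹_{R_𝕏/R_o}`. -/
def HFOmegaRel (I : Ideal (BiRing K m n)) (d : ℤ × ℤ) : ℕ :=
  Module.finrank K (omegaRelPiece K I d)

end MultiProjPoints

/-
Let `R = S/I` with `I = I_𝕏`. The module `Ω¹_{R/K}` is free on the `dX_v` modulo the rows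
`(∂F/∂X_v)_v` with `F ∈ I`. Contracting such a row with the two Euler operators of the bigrading
gives `0` in `R`, so a relation `a dx₀ + b dy₀ = 0` forces `x₀ a = 0 = y₀ b`. Both `x₀` and `y₀` are
nonzerodivisors: an element killed by `y₀` is divisible by every power of `x₀` because `x₀, y₀` is
regular, and then its homogeneous components vanish for degree reasons. The kernel of
`Ω¹_{R/K} → Ω¹_{R/R_o}` is generated by the differentials of the algebra generators `x₀, y₀` of
`R_o`.

Consequently `Ω¹_{R/R_o}` is the quotient of `R(-1,0)^m ⊕ R(0,-1)^n` by the image of `I` under the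
Jacobian with respect to `X_1, …, X_m, Y_1, …, Y_n`. If these partial derivatives of `F ∈ I` lie in
`I`, then so do the two remaining ones, again by Euler and regularity. By first order Taylor
expansion at the points of `𝕏`, a bihomogeneous `F` and all its partial derivatives lie in `I` if
and only if `F ∈ I_𝕐`. Hence the image of the Jacobian in degree `d` is `I_d / (I_𝕐)_d`, of
dimension `HF_𝕐(d) - HF_𝕏(d)`.
-/

namespace MultiProjPoints

section Kaehler

variable {R : Type*} [CommRing R]

theorem ker_kaehlerMap_eq_span (R A B : Type*) [CommRing R] [CommRing A] [CommRing B]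
    [Algebra R A] [Algebra A B] [Algebra R B] [IsScalarTower R A B] :
    LinearMap.ker (KaehlerDifferential.map R A B B) =
      Submodule.span B (Set.range fun a => KaehlerDifferential.D R B (algebraMap A B a)) := by
  rw [← KaehlerDifferential.range_mapBaseChange, LinearMap.range_eq_map,
    ← Submodule.baseChange_top (R := A), ← KaehlerDifferential.span_range_derivation,
    Submodule.baseChange_span, Submodule.map_span, ← Set.range_comp, ← Set.range_comp]
  congr 2
  ext a
  simp

variable {B : Type*} [CommRing B] [Algebra R B]

theorem D_mem_span_image_of_mem_adjoin {s : Set B} {b : B} (hb : b ∈ Algebra.adjoin R s) :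
    KaehlerDifferential.D R B b ∈ Submodule.span B (KaehlerDifferential.D R B '' s) := by
  induction hb using Algebra.adjoin_induction with
  | mem b hb => exact Submodule.subset_span ⟨b, hb, rfl⟩
  | algebraMap r => simp
  | add b c _ _ hb hc => rw [map_add]; exact Submodule.add_mem _ hb hc
  | mul b c _ _ hb hc =>
    rw [Derivation.leibniz]
    exact Submodule.add_mem _ (Submodule.smul_mem _ _ hc) (Submodule.smul_mem _ _ hb)

theorem ker_kaehlerMap_adjoin (s : Set B) :
    LinearMap.ker (KaehlerDifferential.map R (Algebra.adjoin R s) B B) =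
      Submodule.span B (KaehlerDifferential.D R B '' s) := by
  rw [ker_kaehlerMap_eq_span]
  refine le_antisymm (Submodule.span_le.mpr ?_) (Submodule.span_mono ?_)
  · rintro _ ⟨b, rfl⟩
    exact D_mem_span_image_of_mem_adjoin b.2
  · rintro _ ⟨b, hb, rfl⟩
    exact ⟨⟨b, Algebra.subset_adjoin hb⟩, rfl⟩

variable {σ : Type*}

theorem D_eq_sum_pderiv [Fintype σ] (F : MvPolynomial σ R) :
    KaehlerDifferential.D R (MvPolynomial σ R) F =
      ∑ v, pderiv v F • KaehlerDifferential.D R (MvPolynomial σ R) (X v) := by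
  simpa using ((KaehlerDifferential.mvPolynomialBasis R σ).sum_repr
    (KaehlerDifferential.D R (MvPolynomial σ R) F)).symm

variable [Algebra (MvPolynomial σ R) B] [IsScalarTower R (MvPolynomial σ R) B]

theorem D_algebraMap_eq_sum_pderiv [Fintype σ] (F : MvPolynomial σ R) :
    KaehlerDifferential.D R B (algebraMap (MvPolynomial σ R) B F) =
      ∑ v, algebraMap (MvPolynomial σ R) B (pderiv v F) •
        KaehlerDifferential.D R B (algebraMap (MvPolynomial σ R) B (X v)) := by
  simpa only [map_sum, map_smul, KaehlerDifferential.map_D, algebraMap_smul] using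
    congrArg (KaehlerDifferential.map R R (MvPolynomial σ R) B) (D_eq_sum_pderiv F)

theorem sum_smul_D_eq_zero_iff [Fintype σ]
    (hB : Function.Surjective (algebraMap (MvPolynomial σ R) B)) (a : σ → B) :
    ∑ v, a v • KaehlerDifferential.D R B (algebraMap (MvPolynomial σ R) B (X v)) = 0 ↔
      ∃ F, algebraMap (MvPolynomial σ R) B F = 0 ∧
        ∀ v, algebraMap (MvPolynomial σ R) B (pderiv v F) = a v := by
  constructor
  · intro h
    let t := ∑ v, a v ⊗ₜ[MvPolynomial σ R] KaehlerDifferential.D R (MvPolynomial σ R) (X v)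
    have ht : KaehlerDifferential.mapBaseChange R (MvPolynomial σ R) B t = 0 := by
      simpa [t] using h
    obtain ⟨c, hc⟩ := (KaehlerDifferential.exact_kerCotangentToTensor_mapBaseChange R
      (MvPolynomial σ R) B hB t).mp ht
    obtain ⟨⟨F, hF⟩, rfl⟩ := Ideal.toCotangent_surjective _ c
    rw [KaehlerDifferential.kerCotangentToTensor_toCotangent] at hc
    refine ⟨F, hF, fun v => ?_⟩
    classical
    simpa [t, Module.Basis.baseChange_repr_tmul, Finsupp.single_apply, Algebra.smul_def] using
      congrArg (fun x => ((KaehlerDifferential.mvPolynomialBasis R σ).baseChange B).repr x v) hc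
  · rintro ⟨F, hF, hFa⟩
    simp only [← hFa, ← D_algebraMap_eq_sum_pderiv, hF, map_zero]

variable {τ : Type*} [Fintype τ] (ι : τ ↪ σ) {A : Subalgebra R B}

theorem D_adjoin_algebraMap_eq_sum_pderiv [Finite σ]
    (hA : A = Algebra.adjoin R ((fun v => algebraMap (MvPolynomial σ R) B (X v)) '' (Set.range ι)ᶜ))
    (F : MvPolynomial σ R) :
    KaehlerDifferential.D A B (algebraMap (MvPolynomial σ R) B F) =
      ∑ t, algebraMap (MvPolynomial σ R) B (pderiv (ι t) F) •
        KaehlerDifferential.D A B (algebraMap (MvPolynomial σ R) B (X (ι t))) := by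
  have := Fintype.ofFinite σ
  have expansion := congrArg (KaehlerDifferential.map R A B B) (D_algebraMap_eq_sum_pderiv F)
  simp only [map_sum, map_smul, KaehlerDifferential.map_D, Algebra.algebraMap_self,
    RingHom.id_apply] at expansion
  rw [expansion]
  refine (Fintype.sum_of_injective ι ι.injective _ _ (fun v hv => ?_) fun t => rfl).symm
  have hv : algebraMap (MvPolynomial σ R) B (X v) ∈ A :=
    hA ▸ Algebra.subset_adjoin ⟨v, hv, rfl⟩
  rw [show KaehlerDifferential.D A B (algebraMap _ B (X v)) = 0 from
    Derivation.map_algebraMap _ (⟨_, hv⟩ : A), smul_zero]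

theorem sum_smul_D_adjoin_eq_zero_iff [Finite σ]
    (hB : Function.Surjective (algebraMap (MvPolynomial σ R) B))
    (hA : A = Algebra.adjoin R ((fun v => algebraMap (MvPolynomial σ R) B (X v)) '' (Set.range ι)ᶜ))
    (a : τ → B) :
    ∑ t, a t • KaehlerDifferential.D A B (algebraMap (MvPolynomial σ R) B (X (ι t))) = 0 ↔
      ∃ F, algebraMap (MvPolynomial σ R) B F = 0 ∧
        ∀ t, algebraMap (MvPolynomial σ R) B (pderiv (ι t) F) = a t := by
  have := Fintype.ofFinite σ
  constructor
  · intro h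
    have mem_ker : ∑ t, a t • KaehlerDifferential.D R B (algebraMap (MvPolynomial σ R) B (X (ι t)))
        ∈ LinearMap.ker (KaehlerDifferential.map R A B B) := by
      simpa [KaehlerDifferential.map_D] using h
    subst hA
    rw [ker_kaehlerMap_adjoin, ← Set.image_comp,
      Finsupp.mem_span_image_iff_linearCombination] at mem_ker
    obtain ⟨c, hc, hca⟩ := mem_ker
    have relation : ∑ v, (Function.extend ι a 0 v - c v) •
        KaehlerDifferential.D R B (algebraMap (MvPolynomial σ R) B (X v)) = 0 := by
      simp only [sub_smul, Finset.sum_sub_distrib]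
      rw [sub_eq_zero, ← Fintype.sum_of_injective ι ι.injective
        (fun t => a t • KaehlerDifferential.D R B (algebraMap (MvPolynomial σ R) B (X (ι t)))) _
        (fun v hv => by simp [Function.extend_apply' _ _ _ hv])
        (fun t => by simp [ι.injective.extend_apply]), ← hca,
        Finsupp.linearCombination_apply, Finsupp.sum_fintype _ _ (by simp)]
      rfl
    obtain ⟨F, hF, hFa⟩ := (sum_smul_D_eq_zero_iff hB _).mp relation
    refine ⟨F, hF, fun t => ?_⟩
    have hct : c (ι t) = 0 := Finsupp.notMem_support_iff.mp fun ht => hc ht ⟨t, rfl⟩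
    rw [hFa, ι.injective.extend_apply, hct, sub_zero]
  · rintro ⟨F, hF, hFa⟩
    simp only [← hFa, ← D_adjoin_algebraMap_eq_sum_pderiv ι hA, hF, map_zero]

end Kaehler

section Graded

variable {R σ M : Type*} [CommRing R]

section AddCommMonoid

variable [AddCommMonoid M] {w : σ → M}

/-- Weighted homogeneous ideals of a polynomial ring. This elementwise form of `Ideal.IsHomogeneous`
avoids choosing a `GradedAlgebra` instance on the polynomial ring. -/
def IsGradedIdeal (w : σ → M) (I : Ideal (MvPolynomial σ R)) : Prop :=
  ∀ ⦃F⦄, F ∈ I → ∀ d, weightedHomogeneousComponent w d F ∈ I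

theorem isGradedIdeal_span {s : Set (MvPolynomial σ R)}
    (hs : ∀ F ∈ s, ∃ d, IsWeightedHomogeneous w F d) : IsGradedIdeal w (Ideal.span s) := by
  classical
  let _ := weightedGradedAlgebra R w
  exact fun F hF d => weightedHomogeneousComponent_mem_of_mem R w
    (Ideal.homogeneous_span _ s hs) hF d

theorem mem_of_forall_weightedHomogeneousComponent_mem {I : Ideal (MvPolynomial σ R)}
    {F : MvPolynomial σ R} (h : ∀ d, weightedHomogeneousComponent w d F ∈ I) : F ∈ I := by
  rw [← finsum_weightedHomogeneousComponent w F,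
    finsum_eq_sum _ (weightedHomogeneousComponent_finsupp F)]
  exact I.sum_mem fun d _ => h d

theorem sum_map_weight_smul_X_mul_pderiv [Fintype σ] {F : MvPolynomial σ R} {d : M}
    (hF : IsWeightedHomogeneous w F d) (φ : M →+ R) :
    ∑ v, φ (w v) • (X v * pderiv v F) = φ d • F := by
  have euler_monomial : ∀ e ∈ F.support, ∀ c : R,
      ∑ v, φ (w v) • (X v * pderiv v (monomial e c)) = φ d • monomial e c := by
    intro e he c
    have hd : φ d = ∑ v, e v • φ (w v) := by
      rw [← hF (mem_support_iff.mp he), Finsupp.weight_apply, Finsupp.sum_fintype _ _ (by simp)]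
      simp
    rw [hd, Finset.sum_smul]
    simp only [X_mul_pderiv_monomial, smul_comm _ (e _), smul_assoc]
  rw [F.as_sum]
  simp only [map_sum, Finset.mul_sum, Finset.smul_sum]
  rw [Finset.sum_comm]
  exact Finset.sum_congr rfl fun e he => euler_monomial e he _

theorem IsGradedIdeal.sum_map_weight_smul_X_mul_pderiv_mem [Fintype σ]
    {I : Ideal (MvPolynomial σ R)} (hI : IsGradedIdeal w I) (φ : M →+ R) {F : MvPolynomial σ R}
    (hF : F ∈ I) : ∑ v, φ (w v) • (X v * pderiv v F) ∈ I := by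
  let E : MvPolynomial σ R →ₗ[R] MvPolynomial σ R :=
    ∑ v, φ (w v) • LinearMap.mulLeft R (X v) ∘ₗ (pderiv v).toLinearMap
  have hE : ∀ G, E G = ∑ v, φ (w v) • (X v * pderiv v G) := fun G => by simp [E]
  have hsum := finsum_weightedHomogeneousComponent w F
  rw [finsum_eq_sum _ (weightedHomogeneousComponent_finsupp F)] at hsum
  rw [← hE, ← hsum, map_sum]
  refine I.sum_mem fun d _ => ?_
  rw [hE, sum_map_weight_smul_X_mul_pderiv
    (weightedHomogeneousComponent_isWeightedHomogeneous d F) φ, smul_eq_C_mul]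
  exact I.mul_mem_left _ (hI hF d)

end AddCommMonoid

theorem pderiv_weightedHomogeneousComponent [AddCommGroup M] (w : σ → M) (F : MvPolynomial σ R)
    (d : M) (v : σ) :
    pderiv v (weightedHomogeneousComponent w d F) =
      weightedHomogeneousComponent w (d - w v) (pderiv v F) := by
  classical
  ext e
  simp only [coeff_pderiv, coeff_weightedHomogeneousComponent, map_add, Finsupp.weight_single,
    one_smul, eq_sub_iff_add_eq, ite_mul, zero_mul]

end Graded

section Jets

variable {R A : Type*} [CommRing R] [CommRing A] [Algebra R A] {J : Ideal A}

theorem derivation_mem_of_mem_sq (D : Derivation R A A) {a : A} (ha : a ∈ J ^ 2) :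
    D a ∈ J := by
  rw [pow_two] at ha
  induction ha using Submodule.mul_induction_on' with
  | mem_mul_mem b hb c hc =>
    rw [Derivation.leibniz]
    exact J.add_mem (J.mul_mem_right _ hb) (J.mul_mem_right _ hc)
  | add b _ c _ hb hc => rw [map_add]; exact J.add_mem hb hc

theorem aeval_add_sub_linear_mem_sq {σ : Type*} [Fintype σ] (a : σ → A) {b : σ → A}
    (hb : ∀ v, b v ∈ J) (F : MvPolynomial σ R) :
    aeval (a + b) F - (aeval a F + ∑ v, b v * aeval a (pderiv v F)) ∈ J ^ 2 := by
  induction F using MvPolynomial.induction_on with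
  | C c => simp
  | add F G hF hG =>
    convert Ideal.add_mem _ hF hG using 1
    simp only [map_add, mul_add, Finset.sum_add_distrib]; ring
  | mul_X F i hF =>
    classical
    have product_rule : ∑ v, b v * aeval a (pderiv v (F * X i)) =
        b i * aeval a F + a i * ∑ v, b v * aeval a (pderiv v F) := by
      simp [Derivation.leibniz, Pi.single_apply, mul_add, Finset.sum_add_distrib, Finset.mul_sum,
        mul_left_comm, apply_ite (aeval a)]
    have quadratic : (∑ v, b v * aeval a (pderiv v F)) * b i ∈ J ^ 2 := by
      rw [pow_two]
      exact Ideal.mul_mem_mul (J.sum_mem fun v _ => J.mul_mem_right _ (hb v)) (hb i)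
    convert Ideal.add_mem _ (Ideal.mul_mem_right (a i + b i) _ hF) quadratic using 1
    rw [product_rule]
    simp only [map_mul, aeval_X, Pi.add_apply]
    ring

end Jets

section Points

variable {K : Type} [Field K] {m n : ℕ}

theorem weight_biwt (e : (Fin (m + 1) ⊕ Fin (n + 1)) →₀ ℕ) :
    Finsupp.weight (biwt m n) e =
      (((∑ i, e (Sum.inl i) : ℕ) : ℤ), ((∑ j, e (Sum.inr j) : ℕ) : ℤ)) := by
  rw [Finsupp.weight_apply, Finsupp.sum_fintype _ _ (by simp)]
  simp [biwt, Fintype.sum_sum_type, Prod.ext_iff, Prod.fst_sum, Prod.snd_sum]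

theorem isBihom_X (v : Fin (m + 1) ⊕ Fin (n + 1)) : IsBihom K (X v) (biwt m n v) :=
  isWeightedHomogeneous_X K (biwt m n) v

namespace IsBihom

variable {F : BiRing K m n} {d : ℤ × ℤ}

protected theorem pderiv (hF : IsBihom K F d) (v : Fin (m + 1) ⊕ Fin (n + 1)) :
    IsBihom K (pderiv v F) (d - biwt m n v) :=
  IsWeightedHomogeneous.pderiv hF (by simp)

theorem sum_inl_eq_toNat (hF : IsBihom K F d) {e : (Fin (m + 1) ⊕ Fin (n + 1)) →₀ ℕ}
    (he : e ∈ F.support) : ∑ i, e (Sum.inl i) = d.1.toNat := by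
  rw [← hF (mem_support_iff.mp he), weight_biwt, Int.toNat_natCast]

theorem sum_inr_eq_toNat (hF : IsBihom K F d) {e : (Fin (m + 1) ⊕ Fin (n + 1)) →₀ ℕ}
    (he : e ∈ F.support) : ∑ j, e (Sum.inr j) = d.2.toNat := by
  rw [← hF (mem_support_iff.mp he), weight_biwt, Int.toNat_natCast]

theorem aeval_mul_coord {A : Type*} [CommRing A] [Algebra K A] (hF : IsBihom K F d) (s t : A)
    (p : BiPt K m n) :
    aeval (Sum.elim (fun i => s * algebraMap K A (p.1 i)) fun j => t * algebraMap K A (p.2 j)) F =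
      s ^ d.1.toNat * t ^ d.2.toNat * algebraMap K A (evalB K p F) := by
  rw [evalB, aeval_def, eval₂_eq', eval_eq', map_sum, Finset.mul_sum]
  refine Finset.sum_congr rfl fun e he => ?_
  simp only [← hF.sum_inl_eq_toNat he, ← hF.sum_inr_eq_toNat he, Fintype.prod_sum_type,
    Sum.elim_inl, Sum.elim_inr, mul_pow, Finset.prod_mul_distrib, Finset.prod_pow_eq_pow_sum,
    map_mul, map_prod, map_pow]
  ring

end IsBihom

instance (d : ℤ × ℤ) : Module.Finite K (weightedHomogeneousSubmodule K (biwt m n) d) := by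
  have le_restrictTotalDegree : weightedHomogeneousSubmodule K (biwt m n) d ≤
      restrictTotalDegree _ K (d.1.toNat + d.2.toNat) := by
    intro F hF
    rw [mem_restrictTotalDegree, totalDegree, Finset.sup_le_iff]
    intro e he
    rw [Finsupp.sum_fintype _ _ (by simp), Fintype.sum_sum_type,
      IsBihom.sum_inl_eq_toNat hF he, IsBihom.sum_inr_eq_toNat hF he]
  exact Submodule.finiteDimensional_of_le le_restrictTotalDegree

variable {p : BiPt K m n}

theorem ptIdealB_le_ker_eval (p : BiPt K m n) :
    ptIdealB K p ≤ RingHom.ker (eval (Sum.elim p.1 p.2)) :=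
  Ideal.span_le.mpr fun _ hF => hF.2

theorem X_sub_mul_coord_mem_ptIdealB {u v : Fin (m + 1) ⊕ Fin (n + 1)}
    (huv : biwt m n u = biwt m n v) (hu : Sum.elim p.1 p.2 u ≠ 0) :
    X v - C (Sum.elim p.1 p.2 u)⁻¹ * X u * C (Sum.elim p.1 p.2 v) ∈ ptIdealB K p := by
  refine Ideal.subset_span ⟨⟨biwt m n v, ?_⟩, by simp [evalB, hu]⟩
  rw [mul_right_comm, ← C_mul]
  exact (isBihom_X v).sub (huv ▸ (isBihom_X u).C_mul _)

theorem mem_ptIdealB_sq (hp : p.1 ≠ 0 ∧ p.2 ≠ 0) {F : BiRing K m n} {d : ℤ × ℤ}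
    (hF : IsBihom K F d) (h : evalB K p F = 0) (hd : ∀ v, evalB K p (pderiv v F) = 0) :
    F ∈ ptIdealB K p ^ 2 := by
  obtain ⟨i, hi⟩ := Function.ne_iff.mp hp.1
  obtain ⟨j, hj⟩ := Function.ne_iff.mp hp.2
  -- Expand at `p` rescaled by `X_i / p_i` and `Y_j / p_j`: this agrees with the generic point
  -- modulo `ptIdealB K p`, and `F` and its partials vanish there by bihomogeneity.
  let a : Fin (m + 1) ⊕ Fin (n + 1) → BiRing K m n :=
    Sum.elim (fun k => C (p.1 i)⁻¹ * X (Sum.inl i) * algebraMap K _ (p.1 k))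
      fun k => C (p.2 j)⁻¹ * X (Sum.inr j) * algebraMap K _ (p.2 k)
  have X_sub_a_mem : ∀ v, (X - a : Fin (m + 1) ⊕ Fin (n + 1) → BiRing K m n) v ∈ ptIdealB K p := by
    rintro (k | k)
    · exact X_sub_mul_coord_mem_ptIdealB (u := Sum.inl i) (v := Sum.inl k) rfl hi
    · exact X_sub_mul_coord_mem_ptIdealB (u := Sum.inr j) (v := Sum.inr k) rfl hj
  have aeval_a : ∀ {G : BiRing K m n} {e : ℤ × ℤ}, IsBihom K G e → evalB K p G = 0 →
      aeval a G = 0 := fun hG hGp => by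
    rw [hG.aeval_mul_coord, hGp, map_zero, mul_zero]
  simpa only [add_sub_cancel, aeval_X_left_apply, aeval_a hF h, mul_zero, Finset.sum_const_zero,
    fun v => aeval_a (hF.pderiv v) (hd v), add_zero, sub_zero] using
    aeval_add_sub_linear_mem_sq a X_sub_a_mem F

variable {𝕏 : Finset (BiPt K m n)}

theorem isGradedIdeal_vIdealB (𝕏 : Finset (BiPt K m n)) :
    IsGradedIdeal (biwt m n) (vIdealB K 𝕏) :=
  isGradedIdeal_span fun _ hF => hF.1

theorem IsBihom.mem_vIdealB_iff {F : BiRing K m n} {d : ℤ × ℤ} (hF : IsBihom K F d) :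
    F ∈ vIdealB K 𝕏 ↔ ∀ p ∈ 𝕏, evalB K p F = 0 := by
  refine ⟨fun h p hp => ?_, fun h => Ideal.subset_span ⟨⟨d, hF⟩, h⟩⟩
  have vIdealB_le : vIdealB K 𝕏 ≤ RingHom.ker (eval (Sum.elim p.1 p.2)) :=
    Ideal.span_le.mpr fun G hG => hG.2 p hp
  exact vIdealB_le h

theorem IsBihom.mem_dblIdeal_iff (h𝕏 : ∀ p ∈ 𝕏, p.1 ≠ 0 ∧ p.2 ≠ 0) {F : BiRing K m n} {d : ℤ × ℤ}
    (hF : IsBihom K F d) :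
    F ∈ dblIdeal K 𝕏 ↔ F ∈ vIdealB K 𝕏 ∧ ∀ v, pderiv v F ∈ vIdealB K 𝕏 := by
  simp only [dblIdeal, Ideal.mem_iInf, hF.mem_vIdealB_iff, (hF.pderiv _).mem_vIdealB_iff]
  refine ⟨fun h => ⟨fun p hp => ?_, fun v p hp => ?_⟩, fun ⟨h, hd⟩ p hp => ?_⟩
  · exact ptIdealB_le_ker_eval p (Ideal.pow_le_self two_ne_zero (h p hp))
  · exact ptIdealB_le_ker_eval p (derivation_mem_of_mem_sq (pderiv v) (h p hp))
  · exact mem_ptIdealB_sq (h𝕏 p hp) hF (h p hp) fun v => hd v p hp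

end Points

section RegularSequence

theorem RegPair.exists_eq_pow_mul_of_mul_eq_zero {A : Type*} [CommRing A] {a b z : A}
    (h : RegPair a b) (hz : b * z = 0) (N : ℕ) : ∃ z', z = a ^ N * z' ∧ b * z' = 0 := by
  induction N with
  | zero => exact ⟨z, by simp, hz⟩
  | succ N ih =>
    obtain ⟨z', rfl, hz'⟩ := ih
    obtain ⟨u, rfl⟩ := Ideal.mem_span_singleton.mp (h.2 z' (hz' ▸ Ideal.zero_mem _))
    refine ⟨u, by ring, h.1 _ ?_⟩
    rw [mul_left_comm, hz']

variable {K : Type} [Field K] {m n : ℕ} {I : Ideal (BiRing K m n)}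

theorem weightedHomogeneousComponent_X_inl_pow_mul (G : BiRing K m n) {d : ℤ × ℤ} {N : ℕ}
    (i : Fin (m + 1)) (hN : d.1 < N) :
    weightedHomogeneousComponent (biwt m n) d (X (Sum.inl i) ^ N * G) = 0 := by
  classical
  ext e
  rw [coeff_weightedHomogeneousComponent, X_pow_eq_monomial, coeff_monomial_mul', coeff_zero,
    ite_eq_right_iff, ite_eq_right_iff]
  rintro rfl hle
  have N_le : N ≤ ∑ k, e (Sum.inl k) := by
    simpa using (hle (Sum.inl i)).trans
      (Finset.single_le_sum (f := fun k => e (Sum.inl k)) (fun _ _ => zero_le) (Finset.mem_univ i))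
  rw [weight_biwt, Nat.cast_lt] at hN
  exact absurd hN N_le.not_gt

theorem IsGradedIdeal.eq_zero_of_y0B_mul_eq_zero (hI : IsGradedIdeal (biwt m n) I)
    (hreg : RegPair (x0B K I) (y0B K I)) {z : BiRing K m n ⧸ I} (hz : y0B K I * z = 0) :
    z = 0 := by
  obtain ⟨F, rfl⟩ := Ideal.Quotient.mk_surjective z
  refine Ideal.Quotient.eq_zero_iff_mem.mpr
    (mem_of_forall_weightedHomogeneousComponent_mem (w := biwt m n) fun d => ?_)
  obtain ⟨z', hz', -⟩ := hreg.exists_eq_pow_mul_of_mul_eq_zero hz (d.1.toNat + 1)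
  obtain ⟨G, rfl⟩ := Ideal.Quotient.mk_surjective z'
  have F_sub_mem : F - X (Sum.inl 0) ^ (d.1.toNat + 1) * G ∈ I := by
    rwa [← Ideal.Quotient.eq, map_mul, map_pow]
  simpa only [map_sub, weightedHomogeneousComponent_X_inl_pow_mul G (d := d) 0
    (N := d.1.toNat + 1) (by push_cast; omega), sub_zero] using hI F_sub_mem d

end RegularSequence

section ExactSequence

section Contraction

variable {R σ M B : Type*} [CommRing R] [AddCommMonoid M] {w : σ → M} [CommRing B]
  [Algebra R B] [Algebra (MvPolynomial σ R) B] [IsScalarTower R (MvPolynomial σ R) B]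

theorem sum_map_weight_smul_algebraMap_X_mul_eq_zero [Fintype σ]
    (hB : Function.Surjective (algebraMap (MvPolynomial σ R) B))
    (hw : IsGradedIdeal w (RingHom.ker (algebraMap (MvPolynomial σ R) B))) (φ : M →+ R) {a : σ → B}
    (ha : ∑ v, a v • KaehlerDifferential.D R B (algebraMap (MvPolynomial σ R) B (X v)) = 0) :
    ∑ v, φ (w v) • (algebraMap (MvPolynomial σ R) B (X v) * a v) = 0 := by
  obtain ⟨F, hF, hFa⟩ := (sum_smul_D_eq_zero_iff hB a).mp ha
  have euler : IsScalarTower.toAlgHom R (MvPolynomial σ R) B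
      (∑ v, φ (w v) • (X v * pderiv v F)) = 0 :=
    hw.sum_map_weight_smul_X_mul_pderiv_mem φ hF
  simpa only [map_sum, map_smul, map_mul, IsScalarTower.coe_toAlgHom', hFa] using euler

theorem injective_smul_D_X_add_smul_D_X [Finite σ]
    (hB : Function.Surjective (algebraMap (MvPolynomial σ R) B))
    (hw : IsGradedIdeal w (RingHom.ker (algebraMap (MvPolynomial σ R) B))) {u v : σ} {φ ψ : M →+ R}
    (hφu : φ (w u) = 1) (hφv : φ (w v) = 0) (hψu : ψ (w u) = 0) (hψv : ψ (w v) = 1)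
    (hu : ∀ z : B, algebraMap (MvPolynomial σ R) B (X u) * z = 0 → z = 0)
    (hv : ∀ z : B, algebraMap (MvPolynomial σ R) B (X v) * z = 0 → z = 0) :
    Function.Injective fun ab : B × B =>
      ab.1 • KaehlerDifferential.D R B (algebraMap (MvPolynomial σ R) B (X u)) +
        ab.2 • KaehlerDifferential.D R B (algebraMap (MvPolynomial σ R) B (X v)) := by
  classical
  have := Fintype.ofFinite σ
  rintro ⟨a, b⟩ ⟨a', b'⟩ h
  have relation : ∑ t, (Pi.single u (a - a') + Pi.single v (b - b') : σ → B) t •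
      KaehlerDifferential.D R B (algebraMap (MvPolynomial σ R) B (X t)) = 0 := by
    simp only [Pi.add_apply, Pi.single_apply, add_smul, ite_smul, zero_smul,
      Finset.sum_add_distrib, Finset.sum_ite_eq', Finset.mem_univ, if_true, sub_smul]
    rw [sub_add_sub_comm, sub_eq_zero]
    exact h
  have contraction (χ : M →+ R) :
      χ (w u) • (algebraMap (MvPolynomial σ R) B (X u) * (a - a')) +
        χ (w v) • (algebraMap (MvPolynomial σ R) B (X v) * (b - b')) = 0 := by
    simpa [Pi.single_apply, mul_add, smul_add, Finset.sum_add_distrib] using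
      sum_map_weight_smul_algebraMap_X_mul_eq_zero hB hw χ relation
  refine Prod.ext (sub_eq_zero.mp (hu _ ?_)) (sub_eq_zero.mp (hv _ ?_))
  · simpa [hφu, hφv] using contraction φ
  · simpa [hψu, hψv] using contraction ψ

end Contraction

variable {K : Type} [Field K] {m n : ℕ} {I : Ideal (BiRing K m n)}

theorem IsGradedIdeal.injective_smul_D_x0B_add_smul_D_y0B (hI : IsGradedIdeal (biwt m n) I)
    (hreg : RegPair (x0B K I) (y0B K I)) :
    Function.Injective fun ab : (BiRing K m n ⧸ I) × (BiRing K m n ⧸ I) =>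
      ab.1 • KaehlerDifferential.D K (BiRing K m n ⧸ I) (x0B K I) +
        ab.2 • KaehlerDifferential.D K (BiRing K m n ⧸ I) (y0B K I) :=
  injective_smul_D_X_add_smul_D_X (w := biwt m n) (u := Sum.inl 0) (v := Sum.inr 0)
    (φ := (Int.castAddHom K).comp (.fst ℤ ℤ)) (ψ := (Int.castAddHom K).comp (.snd ℤ ℤ))
    Ideal.Quotient.mk_surjective (by rwa [Ideal.Quotient.algebraMap_eq, Ideal.mk_ker])
    (by simp [biwt]) (by simp [biwt]) (by simp [biwt]) (by simp [biwt])
    hreg.1 fun _ => hI.eq_zero_of_y0B_mul_eq_zero hreg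

theorem ker_kaehlerMap_Ro (I : Ideal (BiRing K m n)) :
    LinearMap.ker (KaehlerDifferential.map K (Ro K I) (BiRing K m n ⧸ I) (BiRing K m n ⧸ I)) =
      Submodule.span (BiRing K m n ⧸ I)
        {KaehlerDifferential.D K (BiRing K m n ⧸ I) (x0B K I),
          KaehlerDifferential.D K (BiRing K m n ⧸ I) (y0B K I)} := by
  rw [← Set.image_pair]
  exact ker_kaehlerMap_adjoin {x0B K I, y0B K I}

end ExactSequence

section FreeVariables

/-- The inclusion of the variables `X_1, …, X_m, Y_1, …, Y_n`, whose differentials generate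
`Ω¹_{R_𝕏/R_o}`, among all the variables of `S`. -/
def freeVar (m n : ℕ) : Fin m ⊕ Fin n ↪ Fin (m + 1) ⊕ Fin (n + 1) :=
  (Fin.succEmb m).sumMap (Fin.succEmb n)

theorem compl_range_freeVar (m n : ℕ) :
    (Set.range (freeVar m n))ᶜ = {Sum.inl 0, Sum.inr 0} := by
  ext (i | j)
  · cases i using Fin.cases <;> simp [freeVar]
  · cases j using Fin.cases <;> simp [freeVar]

variable {K : Type} [Field K] {m n : ℕ} {I : Ideal (BiRing K m n)}

theorem Ro_eq_adjoin_image_compl_range_freeVar (I : Ideal (BiRing K m n)) :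
    Ro K I = Algebra.adjoin K
      ((fun v => algebraMap (BiRing K m n) (BiRing K m n ⧸ I) (X v)) ''
        (Set.range (freeVar m n))ᶜ) := by
  rw [compl_range_freeVar, Set.image_pair]
  rfl

theorem IsGradedIdeal.pderiv_mem_of_forall_freeVar (hI : IsGradedIdeal (biwt m n) I)
    (hreg : RegPair (x0B K I) (y0B K I)) {F : BiRing K m n} (hF : F ∈ I)
    (hfree : ∀ t, pderiv (freeVar m n t) F ∈ I) (v : Fin (m + 1) ⊕ Fin (n + 1)) :
    pderiv v F ∈ I := by
  have euler (φ : ℤ × ℤ →+ K) :=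
    Ideal.Quotient.eq_zero_iff_mem.mpr (hI.sum_map_weight_smul_X_mul_pderiv_mem φ hF)
  have hx (i : Fin m) : Ideal.Quotient.mk I (pderiv (Sum.inl i.succ) F) = 0 :=
    Ideal.Quotient.eq_zero_iff_mem.mpr (hfree (Sum.inl i))
  have hy (j : Fin n) : Ideal.Quotient.mk I (pderiv (Sum.inr j.succ) F) = 0 :=
    Ideal.Quotient.eq_zero_iff_mem.mpr (hfree (Sum.inr j))
  rw [← Ideal.Quotient.eq_zero_iff_mem]
  rcases v with i | j
  · cases i using Fin.cases with
    | zero => exact hreg.1 _ (by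
        simpa [x0B, biwt, Fin.sum_univ_succ, hx] using euler ((Int.castAddHom K).comp (.fst ℤ ℤ)))
    | succ i => exact hx i
  · cases j using Fin.cases with
    | zero => exact hI.eq_zero_of_y0B_mul_eq_zero hreg (by
        simpa [y0B, biwt, Fin.sum_univ_succ, hy] using euler ((Int.castAddHom K).comp (.snd ℤ ℤ)))
    | succ j => exact hy j

end FreeVariables

section RelativePresentation

variable {K : Type} [Field K] {m n : ℕ}

/-- The presentation `R_𝕏^{m+n} → Ω¹_{R_𝕏/R_o}` sending the basis vectors to
`dx_1, …, dx_m, dy_1, …, dy_n`. -/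
def relPresentation (I : Ideal (BiRing K m n)) :
    (Fin m ⊕ Fin n → BiRing K m n ⧸ I) →ₗ[BiRing K m n ⧸ I]
      KaehlerDifferential (Ro K I) (BiRing K m n ⧸ I) :=
  Fintype.linearCombination (BiRing K m n ⧸ I) fun t =>
    KaehlerDifferential.D (Ro K I) (BiRing K m n ⧸ I)
      (algebraMap (BiRing K m n) _ (X (freeVar m n t)))

/-- The degree `d` piece of `R_𝕏(-1,0)^m ⊕ R_𝕏(0,-1)^n`, the graded source of
`relPresentation`. -/
def freePiece (I : Ideal (BiRing K m n)) (d : ℤ × ℤ) :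
    Submodule K (Fin m ⊕ Fin n → BiRing K m n ⧸ I) :=
  Submodule.pi Set.univ fun t => degPieceB K I (d - biwt m n (freeVar m n t))

/-- The partial derivatives of a polynomial with respect to `X_1, …, X_m, Y_1, …, Y_n`,
taken modulo `I`. -/
def relJacobian (I : Ideal (BiRing K m n)) :
    BiRing K m n →ₗ[K] (Fin m ⊕ Fin n → BiRing K m n ⧸ I) :=
  LinearMap.pi fun t =>
    (Ideal.Quotient.mkₐ K I).toLinearMap ∘ₗ (pderiv (freeVar m n t)).toLinearMap

variable {I : Ideal (BiRing K m n)}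

theorem relJacobian_apply (F : BiRing K m n) (t : Fin m ⊕ Fin n) :
    relJacobian I F t = Ideal.Quotient.mk I (pderiv (freeVar m n t) F) :=
  rfl

theorem mk_mem_degPieceB {F : BiRing K m n} {d : ℤ × ℤ} (hF : IsBihom K F d) :
    Ideal.Quotient.mk I F ∈ degPieceB K I d :=
  ⟨F, hF, rfl⟩

theorem mul_mem_degPieceB {f g : BiRing K m n ⧸ I} {d e : ℤ × ℤ} (hf : f ∈ degPieceB K I d)
    (hg : g ∈ degPieceB K I e) : f * g ∈ degPieceB K I (d + e) := by
  obtain ⟨F, hF, rfl⟩ := hf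
  obtain ⟨G, hG, rfl⟩ := hg
  exact ⟨F * G, IsWeightedHomogeneous.mul hF hG, map_mul (Ideal.Quotient.mkₐ K I) F G⟩

theorem IsBihom.relJacobian_mem_freePiece {F : BiRing K m n} {d : ℤ × ℤ} (hF : IsBihom K F d) :
    relJacobian I F ∈ freePiece I d :=
  fun t _ => mk_mem_degPieceB (hF.pderiv (freeVar m n t))

theorem relPresentation_relJacobian (F : BiRing K m n) :
    relPresentation I (relJacobian I F) =
      KaehlerDifferential.D (Ro K I) (BiRing K m n ⧸ I) (Ideal.Quotient.mk I F) :=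
  (D_adjoin_algebraMap_eq_sum_pderiv (freeVar m n) (Ro_eq_adjoin_image_compl_range_freeVar I)
    F).symm

theorem relPresentation_eq_zero_iff (a : Fin m ⊕ Fin n → BiRing K m n ⧸ I) :
    relPresentation I a = 0 ↔ ∃ F ∈ I, relJacobian I F = a := by
  simpa only [Ideal.Quotient.algebraMap_eq, Ideal.Quotient.eq_zero_iff_mem, funext_iff,
    relPresentation, Fintype.linearCombination_apply, relJacobian_apply] using
    sum_smul_D_adjoin_eq_zero_iff (freeVar m n) Ideal.Quotient.mk_surjective
      (Ro_eq_adjoin_image_compl_range_freeVar I) a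

theorem map_relPresentation_freePiece (I : Ideal (BiRing K m n)) (d : ℤ × ℤ) :
    (freePiece I d).map ((relPresentation I).restrictScalars K) = omegaRelPiece K I d := by
  refine le_antisymm ?_ (Submodule.span_le.mpr ?_)
  · rintro _ ⟨a, ha, rfl⟩
    change ∑ t, a t • KaehlerDifferential.D (Ro K I) _ (Ideal.Quotient.mk I (X (freeVar m n t))) ∈
      omegaRelPiece K I d
    exact Submodule.sum_mem _ fun t _ => Submodule.subset_span
      ⟨_, _, sub_add_cancel d (biwt m n (freeVar m n t)), a t, ha t trivial, _,
        mk_mem_degPieceB (isBihom_X _), rfl⟩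
  · rintro _ ⟨d₁, d₂, rfl, f, hf, _, ⟨G, hG, rfl⟩, rfl⟩
    refine ⟨f • relJacobian I G, fun t _ => ?_, ?_⟩
    · change f * relJacobian I G t ∈ degPieceB K I (d₁ + d₂ - biwt m n (freeVar m n t))
      rw [add_sub_assoc]
      exact mul_mem_degPieceB hf (IsBihom.relJacobian_mem_freePiece hG t trivial)
    · exact (map_smul (relPresentation I) f _).trans
        (congrArg (f • ·) (relPresentation_relJacobian G))

theorem IsGradedIdeal.freePiece_inf_ker_relPresentation (hI : IsGradedIdeal (biwt m n) I)
    (d : ℤ × ℤ) :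
    freePiece I d ⊓ LinearMap.ker ((relPresentation I).restrictScalars K) =
      (weightedHomogeneousSubmodule K (biwt m n) d ⊓ I.restrictScalars K).map
        (relJacobian I) := by
  classical
  ext a
  constructor
  · rintro ⟨ha, hker⟩
    obtain ⟨F, hF, rfl⟩ := (relPresentation_eq_zero_iff a).mp hker
    refine ⟨weightedHomogeneousComponent (biwt m n) d F,
      ⟨weightedHomogeneousComponent_isWeightedHomogeneous d F, hI hF d⟩, funext fun t => ?_⟩
    obtain ⟨G, hG, hGF⟩ := ha t trivial
    have sub_mem : G - pderiv (freeVar m n t) F ∈ I := Ideal.Quotient.eq.mp hGF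
    have component_sub_mem := hI sub_mem (d - biwt m n (freeVar m n t))
    rw [map_sub, IsWeightedHomogeneous.weightedHomogeneousComponent_same hG,
      ← pderiv_weightedHomogeneousComponent] at component_sub_mem
    exact (Ideal.Quotient.eq.mpr component_sub_mem).symm.trans hGF
  · rintro ⟨F, ⟨hFd, hF⟩, rfl⟩
    exact ⟨IsBihom.relJacobian_mem_freePiece hFd, (relPresentation_eq_zero_iff _).mpr ⟨F, hF, rfl⟩⟩

end RelativePresentation

section HilbertFunctions

/-- A product of submodules, as a submodule of the ambient product, is the abstract product. -/
def piUnivEquiv {R ι : Type*} {V : ι → Type*} [Semiring R] [∀ i, AddCommMonoid (V i)]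
    [∀ i, Module R (V i)] (p : ∀ i, Submodule R (V i)) :
    Submodule.pi Set.univ p ≃ₗ[R] ∀ i, p i where
  toFun a i := ⟨a.1 i, a.2 i trivial⟩
  map_add' _ _ := rfl
  map_smul' _ _ := rfl
  invFun a := ⟨fun i => a i, fun i _ => (a i).2⟩

theorem finrank_map_add_finrank_inf_ker {K V W : Type*} [DivisionRing K] [AddCommGroup V]
    [Module K V] [AddCommGroup W] [Module K W] (f : V →ₗ[K] W) (p : Submodule K V)
    [Module.Finite K p] :
    Module.finrank K (p.map f) + Module.finrank K ↥(p ⊓ LinearMap.ker f) =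
      Module.finrank K p := by
  have rank_nullity := (f.domRestrict p).finrank_range_add_finrank_ker
  rw [LinearMap.range_domRestrict, LinearMap.ker_domRestrict] at rank_nullity
  rwa [← Submodule.map_comap_subtype p (LinearMap.ker f),
    ← (Submodule.equivMapOfInjective p.subtype p.subtype_injective _).finrank_eq]

variable {K : Type} [Field K] {m n : ℕ} {I : Ideal (BiRing K m n)}

instance (I : Ideal (BiRing K m n)) (d : ℤ × ℤ) : Module.Finite K (degPieceB K I d) :=
  inferInstanceAs (Module.Finite K (Submodule.map _ _))

instance (I : Ideal (BiRing K m n)) (d : ℤ × ℤ) : Module.Finite K (freePiece I d) :=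
  Module.Finite.equiv (piUnivEquiv _).symm

theorem finrank_freePiece (I : Ideal (BiRing K m n)) (i j : ℤ) :
    Module.finrank K (freePiece I (i, j)) = m * HFI K I (i - 1, j) + n * HFI K I (i, j - 1) := by
  rw [freePiece, (piUnivEquiv _).finrank_eq, Module.finrank_pi_fintype, Fintype.sum_sum_type]
  change ∑ k : Fin m, HFI K I ((i, j) - biwt m n (freeVar m n (Sum.inl k))) +
    ∑ k : Fin n, HFI K I ((i, j) - biwt m n (freeVar m n (Sum.inr k))) = _
  simp [freeVar, biwt]

theorem HFI_add_finrank_inf (I : Ideal (BiRing K m n)) (d : ℤ × ℤ) :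
    HFI K I d + Module.finrank K
        ↥(weightedHomogeneousSubmodule K (biwt m n) d ⊓ I.restrictScalars K) =
      Module.finrank K (weightedHomogeneousSubmodule K (biwt m n) d) := by
  have ker_mk : LinearMap.ker (Ideal.Quotient.mkₐ K I).toLinearMap = I.restrictScalars K := by
    ext F
    exact Ideal.Quotient.eq_zero_iff_mem
  rw [← ker_mk]
  exact finrank_map_add_finrank_inf_ker _ _

theorem IsGradedIdeal.HFOmegaRel_add_finrank_map_relJacobian (hI : IsGradedIdeal (biwt m n) I)
    (i j : ℤ) :
    HFOmegaRel K I (i, j) + Module.finrank K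
        ((weightedHomogeneousSubmodule K (biwt m n) (i, j) ⊓ I.restrictScalars K).map
          (relJacobian I)) =
      m * HFI K I (i - 1, j) + n * HFI K I (i, j - 1) := by
  rw [HFOmegaRel, ← map_relPresentation_freePiece, ← hI.freePiece_inf_ker_relPresentation,
    ← finrank_freePiece]
  exact finrank_map_add_finrank_inf_ker _ _

theorem inf_vIdealB_inf_ker_relJacobian {𝕏 : Finset (BiPt K m n)}
    (h𝕏 : ∀ p ∈ 𝕏, p.1 ≠ 0 ∧ p.2 ≠ 0) (hACM : ACMxy K 𝕏) (d : ℤ × ℤ) :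
    weightedHomogeneousSubmodule K (biwt m n) d ⊓ (vIdealB K 𝕏).restrictScalars K ⊓
        LinearMap.ker (relJacobian (vIdealB K 𝕏)) =
      weightedHomogeneousSubmodule K (biwt m n) d ⊓ (dblIdeal K 𝕏).restrictScalars K := by
  ext F
  constructor
  · rintro ⟨⟨hFd, hF⟩, hker⟩
    have hfree (t) : pderiv (freeVar m n t) F ∈ vIdealB K 𝕏 :=
      Ideal.Quotient.eq_zero_iff_mem.mp (congrFun hker t)
    exact ⟨hFd, (IsBihom.mem_dblIdeal_iff h𝕏 hFd).mpr
      ⟨hF, (isGradedIdeal_vIdealB 𝕏).pderiv_mem_of_forall_freeVar hACM hF hfree⟩⟩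
  · rintro ⟨hFd, hF⟩
    obtain ⟨hF, hpderiv⟩ := (IsBihom.mem_dblIdeal_iff h𝕏 hFd).mp hF
    exact ⟨⟨hFd, hF⟩, funext fun t => Ideal.Quotient.eq_zero_iff_mem.mpr (hpderiv _)⟩

theorem HFOmegaRel_vIdealB_add_HFI_dblIdeal {𝕏 : Finset (BiPt K m n)}
    (h𝕏 : ∀ p ∈ 𝕏, p.1 ≠ 0 ∧ p.2 ≠ 0) (hACM : ACMxy K 𝕏) (i j : ℤ) :
    HFOmegaRel K (vIdealB K 𝕏) (i, j) + HFI K (dblIdeal K 𝕏) (i, j) =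
      m * HFB K 𝕏 (i - 1, j) + n * HFB K 𝕏 (i, j - 1) + HFB K 𝕏 (i, j) := by
  have presentation :=
    (isGradedIdeal_vIdealB 𝕏).HFOmegaRel_add_finrank_map_relJacobian i j
  have jacobian := finrank_map_add_finrank_inf_ker (relJacobian (vIdealB K 𝕏))
    (weightedHomogeneousSubmodule K (biwt m n) (i, j) ⊓ (vIdealB K 𝕏).restrictScalars K)
  rw [inf_vIdealB_inf_ker_relJacobian h𝕏 hACM] at jacobian
  have single := HFI_add_finrank_inf (vIdealB K 𝕏) (i, j)
  have double := HFI_add_finrank_inf (dblIdeal K 𝕏) (i, j)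
  simp only [HFB]
  linarith

end HilbertFunctions

end MultiProjPoints

open MultiProjPoints in
theorem statement_2_general (K : Type) [Field K] (m n : ℕ) (𝕏 : Finset (BiPt K m n))
    (h𝕏 : ∀ p ∈ 𝕏, p.1 ≠ 0 ∧ p.2 ≠ 0) (hACM : ACMxy K 𝕏)
    (I : Ideal (BiRing K m n)) (hI : I = vIdealB K 𝕏) :
    Function.Injective (fun ab : (BiRing K m n ⧸ I) × (BiRing K m n ⧸ I) =>
      ab.1 • KaehlerDifferential.D K (BiRing K m n ⧸ I) (x0B K I) +
      ab.2 • KaehlerDifferential.D K (BiRing K m n ⧸ I) (y0B K I)) ∧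
    Function.Surjective
      (KaehlerDifferential.map K (Ro K I) (BiRing K m n ⧸ I) (BiRing K m n ⧸ I)) ∧
    LinearMap.ker
      (KaehlerDifferential.map K (Ro K I) (BiRing K m n ⧸ I) (BiRing K m n ⧸ I)) =
      Submodule.span (BiRing K m n ⧸ I)
        {KaehlerDifferential.D K (BiRing K m n ⧸ I) (x0B K I),
         KaehlerDifferential.D K (BiRing K m n ⧸ I) (y0B K I)} ∧
    ∀ i j : ℤ,
      (HFOmegaRel K I (i, j) : ℤ) =
        m * HFB K 𝕏 (i - 1, j) + n * HFB K 𝕏 (i, j - 1) + HFB K 𝕏 (i, j) -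
          HFI K (dblIdeal K 𝕏) (i, j) := by
  subst hI
  refine ⟨(isGradedIdeal_vIdealB 𝕏).injective_smul_D_x0B_add_smul_D_y0B hACM,
    KaehlerDifferential.map_surjective _ _ _, ker_kaehlerMap_Ro _, fun i j => ?_⟩
  rw [eq_sub_iff_add_eq]
  exact_mod_cast HFOmegaRel_vIdealB_add_HFI_dblIdeal h𝕏 hACM i j

open MultiProjPoints in
/-- Proposition 2.11: for an ACM set `𝕏` of `s` distinct
points in `P^m × P^n` there is an exact sequence of bigraded `R_𝕏`-modules
`0 → R_𝕏 dx₀ ⊕ R_𝕏 dy₀ → Ω¹_{R_𝕏/K} → Ω¹_{R_𝕏/R_o} → 0`, and in particular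
`HF_{Ω¹_{R_𝕏/R_o}}(i,j) = m·HF_𝕏(i-1,j) + n·HF_𝕏(i,j-1) + HF_𝕏(i,j) - HF_𝕐(i,j)`
for all `(i,j) ∈ ℕ²`, where `I_𝕐 = I_{p_1}² ∩ ⋯ ∩ I_{p_s}²`. -/
theorem statement_2 (K : Type) [Field K] [CharZero K] [DecidableEq K]
    (m n : ℕ) (𝕏 : Finset (BiPt K m n)) (hgood : GoodConfig K 𝕏)
    (hne : 𝕏.Nonempty) (hACM : ACMxy K 𝕏)
    (I : Ideal (BiRing K m n)) (hI : I = vIdealB K 𝕏) :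
    Function.Injective (fun ab : (BiRing K m n ⧸ I) × (BiRing K m n ⧸ I) =>
      ab.1 • KaehlerDifferential.D K (BiRing K m n ⧸ I) (x0B K I) +
      ab.2 • KaehlerDifferential.D K (BiRing K m n ⧸ I) (y0B K I)) ∧
    Function.Surjective
      (KaehlerDifferential.map K (↥(Ro K I)) (BiRing K m n ⧸ I) (BiRing K m n ⧸ I)) ∧
    LinearMap.ker
      (KaehlerDifferential.map K (↥(Ro K I)) (BiRing K m n ⧸ I) (BiRing K m n ⧸ I)) =
      Submodule.span (BiRing K m n ⧸ I)
        {KaehlerDifferential.D K (BiRing K m n ⧸ I) (x0B K I),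
         KaehlerDifferential.D K (BiRing K m n ⧸ I) (y0B K I)} ∧
    ∀ i j : ℕ,
      (HFOmegaRel K I ((i : ℤ), (j : ℤ)) : ℤ) =
        m * HFB K 𝕏 ((i : ℤ) - 1, (j : ℤ)) + n * HFB K 𝕏 ((i : ℤ), (j : ℤ) - 1) +
          HFB K 𝕏 ((i : ℤ), (j : ℤ)) - HFI K (dblIdeal K 𝕏) ((i : ℤ), (j : ℤ)) := by
  obtain ⟨injective, surjective, ker, hilbert⟩ := statement_2_general K m n 𝕏 hgood.1 hACM I hI
  exact ⟨injective, surjective, ker, fun i j => hilbert i j⟩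
end
end
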